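/- arXiv:0801.3277 — 9 statements merged into one kernel-verified Lean document; each statement's English description precedes it below -/
import Mathlib

section
/- Let n ≥ 1 and let p_1, …, p_n be real numbers such that for every k = 1, …, n one has k·p_1 + (k−1)·p_2 + ⋯ + p_k > 2k − 1. Then ∫_{ℂ^n} ∏_{l=1}^{n} det( I_{n−l+1} + B((x_l, x_{l+1}, …, x_n))·B((x_l, x_{l+1}, …, x_n))* )^{−p_l} dλ(x_1, …, x_n) = π^n · ∏_{k=1}^{n} ( k·p_1 + (k−1)·p_2 + ⋯ + p_k − (2k−1) )^{−1}. -/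
open MeasureTheory Matrix

/-- The `N×N` lower-triangular Toeplitz matrix with first column `(x_N, …, x_1)`:
its `(i,k)` entry is `x_{N-i+k}` (1-based) when `k ≤ i` and `0` otherwise. -/
noncomputable def Bmat {N : ℕ} (x : Fin N → ℂ) : Matrix (Fin N) (Fin N) ℂ :=
  fun i k =>
    if h : (k : ℕ) ≤ (i : ℕ) then x ⟨N - 1 - i + k, by have h1 := i.isLt; omega⟩ else 0

/-- The subvector `(x_{l+1}, …, x_n)` (1-based), i.e. dropping the first `l` coordinates. -/
noncomputable def subvec {n : ℕ} (x : Fin n → ℂ) (l : ℕ) : Fin (n - l) → ℂ :=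
  fun i => x ⟨l + i, by have h1 := i.isLt; omega⟩


theorem det_unit_sum (a b c d : Matrix Unit Unit ℂ) :
    (fromBlocks a b c d).det = a () () * d () () - b () () * c () () := by
  rw [← det_submatrix_equiv_self
    (Equiv.trans finSumFinEquiv.symm (Equiv.sumCongr finOneEquiv finOneEquiv) : Fin (1 + 1) ≃ Unit ⊕ Unit)]
  rw [det_fin_two]
  rfl

theorem schur_core {m : Type*} [Fintype m] [DecidableEq m] (R : Matrix m m ℂ)
    (u : Matrix m Unit ℂ) (v : Matrix Unit m ℂ) (x : Matrix Unit Unit ℂ)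
    (B : Matrix (m ⊕ Unit) (m ⊕ Unit) ℂ) (hB : B = fromBlocks R u v x)
    (E F : Matrix m m ℂ) (hE : (1 + R * Rᴴ) * E = 1) (hF : (1 + Rᴴ * R) * F = 1) :
    (1 + B * Bᴴ).det = (1 + R * Rᴴ).det * ((1 + uᴴ * E * u).det * (1 + v * F * vᴴ).det +
      (x - v * Rᴴ * E * u) () () * star ((x - v * Rᴴ * E * u) () ())) := by
  have hE' : E * (1 + R * Rᴴ) = 1 := mul_eq_one_comm.mp hE
  have hF' : F * (1 + Rᴴ * R) = 1 := mul_eq_one_comm.mp hF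
  have hEH : Eᴴ = E := by
    have h1 : Eᴴ * (1 + R * Rᴴ) = 1 := by
      have := congrArg conjTranspose hE
      simpa [conjTranspose_mul] using this
    calc Eᴴ = Eᴴ * ((1 + R * Rᴴ) * E) := by rw [hE, mul_one]
      _ = E := by rw [← mul_assoc, h1, one_mul]
  have hRF : R * F = E * R := by
    calc R * F = E * (1 + R * Rᴴ) * (R * F) := by rw [hE', one_mul]
      _ = E * R * ((1 + Rᴴ * R) * F) := by noncomm_ring
      _ = E * R := by rw [hF, mul_one]
  set K : Matrix (m ⊕ m) (m ⊕ m) ℂ := fromBlocks 1 R (-Rᴴ) 1 with hK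
  have hKi : K * fromBlocks E (-(R * F)) (Rᴴ * E) F = 1 := by
    rw [hK, fromBlocks_multiply, ← fromBlocks_one]
    congr 1
    · rw [one_mul, ← mul_assoc]; nth_rw 1 [← one_mul E]; rw [← add_mul, hE]
    · simp
    · simp
    · rw [one_mul, neg_mul, mul_neg, neg_neg, ← mul_assoc]; nth_rw 2 [← one_mul F]; rw [← add_mul, add_comm, hF]
  have hKi' := mul_eq_one_comm.mp hKi
  let _ : Invertible K := ⟨_, hKi', hKi⟩
  have hinv : ⅟K = fromBlocks E (-(R * F)) (Rᴴ * E) F := rfl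
  have hKdet : K.det = (1 + R * Rᴴ).det := by
    rw [hK, det_fromBlocks_one₂₂]; simp
  set M : Matrix ((m ⊕ Unit) ⊕ (m ⊕ Unit)) ((m ⊕ Unit) ⊕ (m ⊕ Unit)) ℂ := fromBlocks 1 B (-Bᴴ) 1 with hM
  have hMdet : M.det = (1 + B * Bᴴ).det := by
    rw [hM, det_fromBlocks_one₂₂]; simp
  have hM2 : M.submatrix (Equiv.sumSumSumComm m m Unit Unit) (Equiv.sumSumSumComm m m Unit Unit)
      = fromBlocks K (fromBlocks 0 u (-vᴴ) 0) (fromBlocks 0 v (-uᴴ) 0) (fromBlocks 1 x (-xᴴ) 1) := by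
    ext i j
    rcases i with (i | i) | (i | i) <;> rcases j with (j | j) | (j | j) <;>
      simp [hM, hK, hB, one_apply, fromBlocks, conjTranspose_apply]
  rw [← hMdet, ← det_submatrix_equiv_self (Equiv.sumSumSumComm m m Unit Unit), hM2,
    det_fromBlocks₁₁, hKdet, hinv, fromBlocks_multiply, fromBlocks_multiply, sub_eq_add_neg, fromBlocks_neg, fromBlocks_add]
  congr 1
  have hz : star ((x - v * Rᴴ * E * u) () ()) = (xᴴ - uᴴ * (R * F) * vᴴ) () () := by
    rw [hRF, ← conjTranspose_apply]
    rw [conjTranspose_sub]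
    simp only [conjTranspose_mul, conjTranspose_conjTranspose, hEH, Matrix.mul_assoc]
  rw [hz, det_unit_sum, det_unique, det_unique]
  change _ = (_ : Matrix Unit Unit ℂ) () () * (_ : Matrix Unit Unit ℂ) () () + _
  simp only [PUnit.default_eq_unit, Matrix.zero_mul, Matrix.mul_zero, zero_add, add_zero, neg_zero,
    Matrix.neg_mul, Matrix.mul_neg, neg_neg, ← Matrix.mul_assoc, Matrix.add_apply,
    Matrix.sub_apply, Matrix.neg_apply]
  ring

noncomputable def Tm (m : ℕ) (y : ℕ → ℂ) : Matrix (Fin m) (Fin m) ℂ :=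
  fun i k => if (k : ℕ) ≤ i then y (i - k) else 0

noncomputable def Dt (m : ℕ) (y : ℕ → ℂ) : ℝ := ((1 + Tm m y * (Tm m y)ᴴ).det).re

open scoped ComplexOrder in
theorem posDef_aux {m k : Type*} [Fintype m] [DecidableEq m] [Fintype k] (R : Matrix m k ℂ) :
    (1 + R * Rᴴ).PosDef :=
  PosDef.one.add_posSemidef (posSemidef_self_mul_conjTranspose R)

open scoped ComplexOrder in
theorem det_aux_pos {m k : Type*} [Fintype m] [DecidableEq m] [Fintype k] (R : Matrix m k ℂ) :
    0 < (1 + R * Rᴴ).det := (posDef_aux R).det_pos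

theorem Dt_coe (m : ℕ) (y : ℕ → ℂ) : (1 + Tm m y * (Tm m y)ᴴ).det = (Dt m y : ℂ) := by
  have h := det_aux_pos (Tm m y)
  rw [Complex.lt_def] at h
  apply Complex.ext
  · rfl
  · simpa using h.2.symm

theorem Dt_pos (m : ℕ) (y : ℕ → ℂ) : 0 < Dt m y := by
  have h := det_aux_pos (Tm m y)
  rw [Complex.lt_def] at h
  exact h.1

theorem Dt_zero (y : ℕ → ℂ) : Dt 0 y = 1 := by simp [Dt]

theorem Tm_congr {m : ℕ} {y y' : ℕ → ℂ} (h : ∀ j < m, y j = y' j) : Tm m y = Tm m y' := by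
  ext i k
  unfold Tm
  split_ifs
  · exact h _ (by omega)
  · rfl

theorem Dt_congr {m : ℕ} {y y' : ℕ → ℂ} (h : ∀ j < m, y j = y' j) : Dt m y = Dt m y' := by
  unfold Dt; rw [Tm_congr h]

open scoped ComplexOrder in
theorem Dt_rec (m : ℕ) (y : ℕ → ℂ) : ∃ b : ℂ, ∀ a : ℂ,
    Dt (m + 1) (Function.update y m a) * Dt (m - 1) y
      = Dt m y ^ 2 + ‖(Dt (m - 1) y : ℂ) * a + b‖ ^ 2 := by
  set R : Matrix (Fin m) (Fin m) ℂ := fun i k => Tm (m + 1) y i.castSucc k.succ with hR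
  set u : Matrix (Fin m) Unit ℂ := fun i _ => Tm (m + 1) y i.castSucc 0 with hu
  set v : Matrix Unit (Fin m) ℂ := fun _ k => Tm (m + 1) y (Fin.last m) k.succ with hv
  have hRd : (1 + R * Rᴴ).det = (Dt (m - 1) y : ℂ) := by
    cases m with
    | zero => simp [Dt_zero]
    | succ m =>
      rw [det_succ_row_zero, Fin.sum_univ_succ]
      have h0 : ∀ k, R 0 k = 0 := by
        intro k
        simp [hR, Tm]
      have h1 : ∀ k, (1 + R * Rᴴ) 0 k = (1 : Matrix (Fin (m + 1)) (Fin (m + 1)) ℂ) 0 k := by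
        intro k
        simp [Matrix.add_apply, Matrix.mul_apply, h0]
      simp only [h1]
      rw [Finset.sum_eq_zero (by intro k _; simp [one_apply, Fin.succ_ne_zero, (Fin.succ_ne_zero _).symm])]
      simp only [Nat.add_sub_cancel]
      rw [← Dt_coe]
      simp only [Fin.val_zero, pow_zero, one_apply_eq, one_mul, add_zero]
      congr 1
      ext i j
      simp only [submatrix_apply, Matrix.add_apply, Matrix.mul_apply, Fin.sum_univ_castSucc]
      have hs1 : ∀ (i k : Fin m), R i.succ k.castSucc = Tm m y i k := by
        intro i k
        simp [hR, Tm]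
      have hs2 : ∀ (i : Fin m), R i.succ (Fin.last m) = 0 := by
        intro i
        have := i.isLt
        simp only [hR, Tm, Fin.val_castSucc, Fin.val_succ, Fin.val_last]
        rw [if_neg (by omega)]
      have hz : ∀ i : Fin m, (0 : Fin (m + 1)).succAbove i = i.succ := fun i => by simp
      simp only [conjTranspose_apply, hz, hs1, hs2, zero_mul, add_zero, one_apply, Fin.succ_inj]
  have hud : (1 + R * Rᴴ + u * uᴴ) = 1 + Tm m y * (Tm m y)ᴴ := by
    have : ∀ i j, ∑ k, Tm (m + 1) y (Fin.castSucc i) k * star (Tm (m + 1) y (Fin.castSucc j) k)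
      = ∑ k, Tm m y i k * star (Tm m y j k) := by
      intro i j
      rw [Fin.sum_univ_castSucc]
      simp [Tm, (show ∀ i : Fin m, ¬ (m ≤ (i:ℕ)) from fun i => by omega)]
    ext i j
    have h := this i j
    rw [Fin.sum_univ_succ] at h
    simp only [add_assoc, Matrix.add_apply, Matrix.mul_apply, conjTranspose_apply, ← h]
    simp [hR, hu, add_comm]
  have hvd : (1 + Rᴴ * R + vᴴ * v) = 1 + (Tm m y)ᴴ * Tm m y := by
    have : ∀ i j, ∑ k, star (Tm (m + 1) y k (Fin.succ i)) * (Tm (m + 1) y k (Fin.succ j))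
      = ∑ k, star (Tm m y k i) * (Tm m y k j) := by
      intro i j
      rw [Fin.sum_univ_succ]
      simp [Tm]
    ext i j
    have h := this i j
    rw [Fin.sum_univ_castSucc] at h
    simp only [add_assoc, Matrix.add_apply, Matrix.mul_apply, conjTranspose_apply, ← h]
    simp [hR, hv]
  have hpos1 : IsUnit (1 + R * Rᴴ).det := (det_aux_pos R).ne'.isUnit
  have hpos2 : IsUnit (1 + Rᴴ * R).det := by rwa [det_one_add_mul_comm]
  refine ⟨-((Dt (m - 1) y : ℂ) * (v * Rᴴ * (1 + R * Rᴴ)⁻¹ * u) () ()), fun a => ?_⟩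
  set e1 : Fin m ⊕ Unit ≃ Fin (m + 1) :=
    ((Equiv.optionEquivSumPUnit (Fin m)).symm.trans finSuccEquivLast.symm)
  set e2 : Fin m ⊕ Unit ≃ Fin (m + 1) :=
    ((Equiv.optionEquivSumPUnit (Fin m)).symm.trans (finSuccEquiv m).symm)
  set T := Tm (m + 1) (Function.update y m a) with hT
  have hB : T.submatrix e1 e2 = fromBlocks R u v (Matrix.of fun _ _ => a) := by
    ext i j
    rcases i with i | i <;> rcases j with j | j <;>
      simp only [fromBlocks_apply₁₁, fromBlocks_apply₁₂, fromBlocks_apply₂₁, fromBlocks_apply₂₂,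
        submatrix_apply]
    · have h1 : i.val - (j.val + 1) ≠ m := by omega
      simp [e1, e2, hT, hR, Tm, Function.update_apply, h1]
    · have h1 : i.val ≠ m := by omega
      simp [e1, e2, hT, hu, Tm, Function.update_apply, h1]
    · have h1 : m - (j.val + 1) ≠ m := by omega
      simp [e1, e2, hT, hv, Tm, Function.update_apply, h1]
    · simp [e1, e2, hT, Tm, Function.update_apply]
  have hmain := schur_core R u v (Matrix.of fun _ _ => a) _ hB _ _ (mul_nonsing_inv _ hpos1)
    (mul_nonsing_inv _ hpos2)
  have hD1 : (1 + T.submatrix e1 e2 * (T.submatrix e1 e2)ᴴ).det = (Dt (m + 1) (Function.update y m a) : ℂ) := by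
    rw [← Dt_coe, ← det_submatrix_equiv_self e1 (1 + _), ← hT, conjTranspose_submatrix,
      submatrix_mul_equiv]
    nth_rw 1 [← submatrix_one_equiv e1]
    rfl
  have hD2 := det_add_mul u uᴴ hpos1
  rw [hud, hRd, Dt_coe] at hD2
  have hD3 := det_add_mul vᴴ v hpos2
  rw [hvd, det_one_add_mul_comm, Dt_coe, det_one_add_mul_comm, hRd] at hD3
  rw [hD1, hRd] at hmain
  have hfin : (Dt (m + 1) (Function.update y m a) : ℂ) * Dt (m - 1) y = (Dt m y : ℂ) ^ 2 +
    (‖(Dt (m - 1) y : ℂ) * a + -((Dt (m - 1) y : ℂ) * (v * Rᴴ * (1 + R * Rᴴ)⁻¹ * u) () ())‖ : ℂ) ^ 2 := by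
    rw [← Complex.mul_conj', hmain, sq]
    nth_rw 1 [hD2]
    rw [hD3]
    simp only [Matrix.sub_apply, of_apply, map_add, map_mul, map_neg, Complex.conj_ofReal, star_sub]
    simp only [Complex.star_def]
    ring
  exact_mod_cast hfin

open Filter Topology in
theorem radial_int (q : ℝ) (hq : 1 < q) :
    Integrable (fun z : ℂ => (1 + ‖z‖ ^ 2) ^ (-q)) ∧
    ∫ z : ℂ, (1 + ‖z‖ ^ 2) ^ (-q) = Real.pi / (q - 1) := by
  constructor
  · have := integrable_rpow_neg_one_add_norm_sq (E := ℂ) (μ := volume) (r := 2 * q) (by simp; linarith)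
    convert this using 3
    ring
  · rw [integral_fun_norm_addHaar volume (fun r : ℝ => (1 + r ^ 2) ^ (-q))]
    have hd : ∀ x ∈ Set.Ici (0:ℝ), HasDerivAt (fun r : ℝ => -(1 / (2 * (q - 1))) * (1 + r ^ 2) ^ (1 - q))
        (x * (1 + x ^ 2) ^ (-q)) x := by
      intro x _
      have h1 : HasDerivAt (fun r : ℝ => 1 + r ^ 2) (2 * x) x := by
        simpa using (hasDerivAt_pow 2 x).const_add 1
      have h2 := (h1.rpow_const (p := 1 - q) (Or.inl (by positivity))).const_mul (-(1 / (2 * (q - 1))))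
      refine h2.congr_deriv ?_
      have : q - 1 ≠ 0 := by linarith
      rw [show 1 - q - 1 = -q by ring]
      field_simp
      ring
    have hl : Tendsto (fun r : ℝ => -(1 / (2 * (q - 1))) * (1 + r ^ 2) ^ (1 - q)) atTop (𝓝 0) := by
      rw [← mul_zero (-(1 / (2 * (q - 1))))]
      apply Tendsto.const_mul
      have h1 := tendsto_rpow_neg_atTop (y := q - 1) (by linarith)
      have h2 : Tendsto (fun r : ℝ => 1 + r ^ 2) atTop atTop :=
        tendsto_atTop_add_const_left _ _ (tendsto_pow_atTop (by norm_num))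
      have := h1.comp h2
      simpa [Function.comp_def] using this
    have := integral_Ioi_of_hasDerivAt_of_nonneg' hd (fun x hx => by
      have : 0 < x := hx
      positivity) hl
    have hv : (volume : Measure ℂ).real (Metric.ball 0 1) = Real.pi := by
      simp [Measure.real, Complex.volume_ball]
    simp only [Complex.finrank_real_complex, hv, smul_eq_mul, nsmul_eq_mul]
    simp only [show 2 - 1 = 1 from rfl, pow_one, this]
    have : q - 1 ≠ 0 := by linarith
    simp
    field_simp

theorem affine_lint (q A c : ℝ) (b : ℂ) (hq : 1 < q) (hA : 0 < A) (hc : 0 < c) :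
    ∫⁻ z : ℂ, ENNReal.ofReal (((A ^ 2 + ‖(c : ℂ) * z + b‖ ^ 2) / c) ^ (-q))
      = ENNReal.ofReal (Real.pi / (q - 1) * (A ^ (2 - 2 * q) * c ^ (q - 2))) := by
  obtain ⟨h1, h2⟩ := radial_int q hq
  set g : ℂ → ℝ := fun z : ℂ => (1 + ‖z‖ ^ 2) ^ (-q) with hg
  have hs : c / A ≠ 0 := by positivity
  have hpt : ∀ z : ℂ, ((A ^ 2 + ‖(c : ℂ) * z + b‖ ^ 2) / c) ^ (-q)
      = (A ^ 2 / c) ^ (-q) * g ((c / A) • (z + b / c)) := by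
    intro z
    rw [hg]
    dsimp only
    rw [← Real.mul_rpow (by positivity) (by positivity)]
    congr 1
    have hcc : (c : ℂ) ≠ 0 := by exact_mod_cast hc.ne'
    have : (c : ℂ) * z + b = c * (z + b / c) := by field_simp
    rw [this, norm_smul, norm_mul]
    simp only [Complex.norm_real, Real.norm_eq_abs, abs_of_pos hc, abs_of_pos (div_pos hc hA)]
    field_simp
  have hi : Integrable (fun z : ℂ => (A ^ 2 / c) ^ (-q) * g ((c / A) • (z + b / c))) := by
    apply Integrable.const_mul
    exact (h1.comp_smul hs).comp_add_right (b / c)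
  simp_rw [hpt]
  rw [← ofReal_integral_eq_lintegral_ofReal hi (Filter.Eventually.of_forall fun z => by
    simp only [hg]; positivity)]
  congr 1
  rw [integral_const_mul, integral_add_right_eq_self (fun z : ℂ => g ((c / A) • z)),
    Measure.integral_comp_smul, h2, Complex.finrank_real_complex, smul_eq_mul,
    abs_of_pos (by positivity)]
  have e1 : (A ^ 2 / c) ^ (-q) = A ^ (-(2 * q)) * c ^ q := by
    rw [Real.div_rpow (by positivity) hc.le, Real.rpow_neg hc.le, div_inv_eq_mul,
      ← Real.rpow_natCast, ← Real.rpow_mul hA.le]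
    congr 2
    push_cast; ring
  rw [e1, show 2 - 2 * q = -(2 * q) + (2 : ℕ) by push_cast; ring,
    show q - 2 = q - (2 : ℕ) by push_cast; ring, Real.rpow_add_natCast hA.ne',
    Real.rpow_sub_natCast hc.ne']
  field_simp

noncomputable def Ys {n : ℕ} (x : Fin n → ℂ) : ℕ → ℂ :=
  fun j => if h : j < n then x ⟨n - 1 - j, by omega⟩ else 0

theorem Bmat_eq {n : ℕ} (x : Fin n → ℂ) (l : ℕ) : Bmat (subvec x l) = Tm (n - l) (Ys x) := by
  ext i k
  have hi := i.isLt
  have hk := k.isLt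
  by_cases h : (k : ℕ) ≤ i
  · simp only [Bmat, subvec, Tm, Ys, h, dite_true, if_true]
    rw [dif_pos (by omega)]
    congr 2
    omega
  · simp [Bmat, Tm, h]

theorem Ys_cons_lt {n : ℕ} (a : ℂ) (x : Fin n → ℂ) (j : ℕ) (hj : j < n) :
    Ys (Fin.cons a x : Fin (n + 1) → ℂ) j = Ys x j := by
  unfold Ys
  rw [dif_pos (by omega), dif_pos hj]
  have : (⟨n + 1 - 1 - j, by omega⟩ : Fin (n + 1)) = Fin.succ ⟨n - 1 - j, by omega⟩ := by
    ext; simp; omega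
  rw [this, Fin.cons_succ]

theorem Ys_cons_eq {n : ℕ} (a : ℂ) (x : Fin n → ℂ) :
    Ys (Fin.cons a x : Fin (n + 1) → ℂ) n = a := by
  unfold Ys
  rw [dif_pos (by omega)]
  have : (⟨n + 1 - 1 - n, by omega⟩ : Fin (n + 1)) = 0 := by
    ext; simp
  rw [this, Fin.cons_zero]

theorem measurable_Dt {n : ℕ} (m : ℕ) : Measurable (fun x : Fin n → ℂ => Dt m (Ys x)) := by
  have hY : ∀ j, Continuous (fun x : Fin n → ℂ => Ys x j) := by
    intro j
    unfold Ys
    split_ifs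
    · fun_prop
    · fun_prop
  have hT : Continuous (fun x : Fin n → ℂ => Tm m (Ys x)) := by
    refine continuous_matrix fun i k => ?_
    unfold Tm
    split_ifs
    · exact hY _
    · exact continuous_const
  unfold Dt
  apply Continuous.measurable
  apply Complex.continuous_re.comp
  apply Continuous.matrix_det
  exact continuous_const.add (hT.matrix_mul hT.matrix_conjTranspose)

noncomputable def qn (q : ℕ → ℝ) (l : ℕ) : ℝ :=
  q (l + 1) + (if l = 0 then 2 * q 0 - 2 else 0) + (if l = 1 then 2 - q 0 else 0)

theorem qn_sum (q : ℕ → ℝ) (k : ℕ) :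
    ∑ j ∈ Finset.range (k + 1), (((k : ℝ) + 1) - j) * qn q j
      = (∑ j ∈ Finset.range (k + 2), (((k : ℝ) + 2) - j) * q j) - 2 := by
  have h1 : ∑ j ∈ Finset.range (k + 1), (((k : ℝ) + 1) - j) * (if j = 0 then 2 * q 0 - 2 else 0)
      = (k + 1) * (2 * q 0 - 2) := by
    simp [mul_ite]
  have h2 : ∑ j ∈ Finset.range (k + 1), (((k : ℝ) + 1) - j) * (if j = 1 then 2 - q 0 else 0)
      = k * (2 - q 0) := by
    simp only [mul_ite, mul_zero, Finset.sum_ite_eq', Finset.mem_range]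
    split_ifs with h
    · push_cast; ring
    · have : k = 0 := by omega
      simp [this]
  rw [Finset.sum_range_succ' _ (k + 1)]
  simp only [qn, mul_add, Finset.sum_add_distrib] at *
  rw [h1, h2]
  push_cast
  have h3 : ∑ x ∈ Finset.range (k + 1), ((k : ℝ) + 1 - x) * q (x + 1)
      = ∑ x ∈ Finset.range (k + 1), ((k : ℝ) + 2 - (x + 1)) * q (x + 1) :=
    Finset.sum_congr rfl fun x _ => by ring
  rw [h3]
  ring

theorem prod_step (n : ℕ) (q : ℕ → ℝ) (y : ℕ → ℂ) :
    (∏ l ∈ Finset.range n, Dt (n - l) y ^ (-(q (l + 1)))) *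
      (Dt n y ^ (2 - 2 * q 0) * Dt (n - 1) y ^ (q 0 - 2))
    = ∏ l ∈ Finset.range n, Dt (n - l) y ^ (-(qn q l)) := by
  match n with
  | 0 => simp [Dt_zero]
  | 1 =>
    simp only [Finset.prod_range_one, Nat.sub_zero, Nat.sub_self, Dt_zero, Real.one_rpow, mul_one]
    rw [← Real.rpow_add (Dt_pos _ _)]
    congr 1
    simp [qn]; ring
  | n + 2 =>
    rw [Finset.prod_range_succ', Finset.prod_range_succ', Finset.prod_range_succ',
      Finset.prod_range_succ']
    have e : ∀ l, qn q (l + 1 + 1) = q (l + 1 + 1 + 1) := by intro l; simp [qn]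
    simp only [e]
    simp only [Nat.sub_zero, zero_add, show n + 2 - 1 = n + 1 from rfl]
    have e0 : -(qn q 0) = -(q 1) + (2 - 2 * q 0) := by simp [qn]; ring
    have e1 : -(qn q 1) = -(q (1 + 1)) + (q 0 - 2) := by simp [qn]; ring
    rw [e0, e1, Real.rpow_add (Dt_pos _ _), Real.rpow_add (Dt_pos _ _)]
    ring

theorem main_lint (n : ℕ) : ∀ (q : ℕ → ℝ),
    (∀ k < n, (∑ j ∈ Finset.range (k + 1), (((k : ℝ) + 1) - j) * q j) > 2 * ((k : ℝ) + 1) - 1) →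
    ∫⁻ x : Fin n → ℂ, ENNReal.ofReal (∏ l ∈ Finset.range n, Dt (n - l) (Ys x) ^ (-(q l)))
      = ENNReal.ofReal (Real.pi ^ n * ∏ k ∈ Finset.range n,
        ((∑ j ∈ Finset.range (k + 1), (((k : ℝ) + 1) - j) * q j) - (2 * ((k : ℝ) + 1) - 1))⁻¹) := by
  induction n with
  | zero => intro q _; simp [volume_pi]
  | succ n ih =>
    intro q hq
    have hq0 : 1 < q 0 := by
      have := hq 0 (by omega)
      simp at this
      linarith
    have hmeas : Measurable (fun x : Fin (n + 1) → ℂ =>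
        ENNReal.ofReal (∏ l ∈ Finset.range (n + 1), Dt (n + 1 - l) (Ys x) ^ (-(q l)))) := by
      apply Measurable.ennreal_ofReal
      apply Finset.measurable_fun_prod
      intro l _
      exact (measurable_Dt _).pow_const _
    have hmp := (volume_preserving_piFinSuccAbove (fun _ : Fin (n + 1) => ℂ) 0).symm
    rw [← hmp.lintegral_comp hmeas, Measure.volume_eq_prod]
    refine (lintegral_prod_symm' _ (hmeas.comp (MeasurableEquiv.measurable
      (MeasurableEquiv.piFinSuccAbove (fun _ : Fin (n + 1) => ℂ) 0).symm))).trans ?_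
    simp only [Function.comp_apply]
    have hinner : ∀ x : Fin n → ℂ, ∫⁻ a : ℂ, ENNReal.ofReal (∏ l ∈ Finset.range (n + 1),
        Dt (n + 1 - l) (Ys ((MeasurableEquiv.piFinSuccAbove (fun _ : Fin (n + 1) => ℂ) 0).symm (a, x)))
          ^ (-(q l)))
        = ENNReal.ofReal (Real.pi / (q 0 - 1)) *
          ENNReal.ofReal (∏ l ∈ Finset.range n, Dt (n - l) (Ys x) ^ (-(qn q l))) := by
      intro x
      obtain ⟨b, hb⟩ := Dt_rec n (Ys x)
      have hP : 0 ≤ ∏ l ∈ Finset.range n, Dt (n - l) (Ys x) ^ (-(q (l + 1))) :=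
        Finset.prod_nonneg fun l _ => Real.rpow_nonneg (Dt_pos _ _).le _
      have hc := Dt_pos (n - 1) (Ys x)
      have hpt : ∀ a : ℂ, ENNReal.ofReal (∏ l ∈ Finset.range (n + 1),
          Dt (n + 1 - l) (Ys ((MeasurableEquiv.piFinSuccAbove (fun _ : Fin (n + 1) => ℂ) 0).symm (a, x)))
            ^ (-(q l)))
          = ENNReal.ofReal (∏ l ∈ Finset.range n, Dt (n - l) (Ys x) ^ (-(q (l + 1)))) *
            ENNReal.ofReal (((Dt n (Ys x) ^ 2 + ‖(Dt (n - 1) (Ys x) : ℂ) * a + b‖ ^ 2)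
              / Dt (n - 1) (Ys x)) ^ (-(q 0))) := by
        intro a
        have hx : (MeasurableEquiv.piFinSuccAbove (fun _ : Fin (n + 1) => ℂ) 0).symm (a, x)
            = (Fin.cons a x : Fin (n + 1) → ℂ) := by
          simp [MeasurableEquiv.piFinSuccAbove, Fin.insertNthEquiv]
        rw [hx, ← ENNReal.ofReal_mul hP, Finset.prod_range_succ', ← hb a,
          mul_div_cancel_right₀ _ hc.ne']
        congr 2
        · refine Finset.prod_congr rfl fun l _ => ?_
          rw [show n + 1 - (l + 1) = n - l by omega]
          congr 1
          exact Dt_congr fun j hj => Ys_cons_lt a x j (by omega)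
        · congr 1
          refine Dt_congr fun j hj => ?_
          rcases Nat.lt_succ_iff_lt_or_eq.mp hj with h | h
          · rw [Ys_cons_lt a x j h, Function.update_of_ne (by omega)]
          · subst h
            rw [Ys_cons_eq, Function.update_self]
      simp_rw [hpt]
      rw [lintegral_const_mul' _ _ ENNReal.ofReal_ne_top, affine_lint _ _ _ _ hq0 (Dt_pos _ _) hc,
        ← prod_step, ← ENNReal.ofReal_mul hP,
        ← ENNReal.ofReal_mul (div_nonneg Real.pi_pos.le (by linarith))]
      congr 1
      ring
    simp_rw [hinner]
    rw [lintegral_const_mul' _ _ ENNReal.ofReal_ne_top, ih (qn q),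
      ← ENNReal.ofReal_mul (div_nonneg Real.pi_pos.le (by linarith))]
    · congr 1
      rw [Finset.prod_range_succ']
      simp only [qn_sum]
      have : ∀ k : ℕ, (∑ j ∈ Finset.range (k + 1 + 1), (((k + 1 : ℕ) : ℝ) + 1 - j) * q j)
            - (2 * (((k + 1 : ℕ) : ℝ) + 1) - 1)
          = (∑ j ∈ Finset.range (k + 2), ((k : ℝ) + 2 - j) * q j) - 2 - (2 * ((k : ℝ) + 1) - 1) := by
        intro k
        have : (((k + 1 : ℕ) : ℝ) + 1) = (k : ℝ) + 2 := by push_cast; ring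
        rw [this]; ring
      simp only [this]
      simp
      ring
    · intro k hk
      have := hq (k + 1) (by omega)
      rw [qn_sum]
      have e : (((k + 1 : ℕ) : ℝ) + 1) = (k : ℝ) + 2 := by push_cast; ring
      rw [e] at this
      linarith

/-- If `k·p₁ + (k−1)·p₂ + ⋯ + p_k > 2k−1` for every `1 ≤ k ≤ n`, then
`∫ ∏_{l=1}^n det(1 + B(x_l,…,x_n)B(x_l,…,x_n)*)^{-p_l} dλ
  = πⁿ ∏_{k=1}^n (k p₁ + (k−1) p₂ + ⋯ + p_k − (2k−1))⁻¹`. -/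
theorem stmt0 (n : ℕ) (hn : 1 ≤ n) (p : ℕ → ℝ)
    (hp : ∀ k, 1 ≤ k → k ≤ n →
      (∑ j ∈ Finset.range k, ((k : ℝ) - j) * p (j + 1)) > 2 * (k : ℝ) - 1) :
    (∫ x : Fin n → ℂ,
        ∏ l ∈ Finset.range n,
          ((1 + Bmat (subvec x l) * (Bmat (subvec x l))ᴴ).det).re ^ (-(p (l + 1))))
      = Real.pi ^ n *
        ∏ k ∈ Finset.range n,
          ((∑ j ∈ Finset.range (k + 1), (((k : ℝ) + 1) - j) * p (j + 1))
            - (2 * ((k : ℝ) + 1) - 1))⁻¹ := by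
  have hq := main_lint n (fun l => p (l + 1)) (fun k hk => by
    have := hp (k + 1) (by omega) (by omega)
    push_cast at this
    exact this)
  simp only [Bmat_eq]
  change (∫ x : Fin n → ℂ, ∏ l ∈ Finset.range n, Dt (n - l) (Ys x) ^ (-(p (l + 1)))) = _
  rw [integral_eq_lintegral_of_nonneg_ae, hq, ENNReal.toReal_ofReal]
  · apply mul_nonneg (by positivity)
    apply Finset.prod_nonneg
    intro k hk
    have := hp (k + 1) (by omega) (by have := Finset.mem_range.mp hk; omega)
    push_cast at this
    apply inv_nonneg.mpr
    linarith
  · exact Filter.Eventually.of_forall fun x =>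
      Finset.prod_nonneg fun l _ => Real.rpow_nonneg (Dt_pos _ _).le _
  · apply Measurable.aestronglyMeasurable
    apply Finset.measurable_fun_prod
    intro l _
    exact (measurable_Dt _).pow_const _
end

section
/- Let n ≥ 1 and let p be a real number. The function ℂ^n → ℝ, x ↦ det( I_n + B(x)·B(x)* )^{−p}, is integrable with respect to Lebesgue measure λ on ℂ^n if and only if p > 2 − 1/n. -/
open MeasureTheory Matrix

/-- shift -/
def Sh (n : ℕ) : Matrix (Fin n) (Fin n) ℂ := fun i k => if (i : ℕ) = k + 1 then 1 else 0

def colz {m : ℕ} (M : Matrix (Fin (m+1)) (Fin (m+1)) ℂ) : Fin (m+1) → ℂ := fun j => M j.rev 0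

lemma Sh_pow (n k : ℕ) (i l : Fin n) : (Sh n ^ k) i l = if (i : ℕ) = l + k then 1 else 0 := by
  induction k generalizing i l with
  | zero => simp [Matrix.one_apply, Fin.ext_iff]
  | succ k ih =>
    rw [pow_succ, Matrix.mul_apply]
    simp only [ih]
    by_cases h : (i : ℕ) = l + (k + 1)
    · rw [Finset.sum_eq_single (⟨l + 1, by have := i.isLt; omega⟩ : Fin n)]
      · simp [Sh, h]; omega
      · intro b _ hb
        simp only [Sh]
        rw [if_neg (c := (b : ℕ) = l + 1)]
        · simp
        · intro h2; exact hb (Fin.ext h2)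
      · simp
    · rw [if_neg h]
      apply Finset.sum_eq_zero
      intro b _
      simp only [Sh]
      split_ifs <;> first | omega | simp

lemma Bmat_eq_sum {m : ℕ} (x : Fin (m+1) → ℂ) : Bmat x = ∑ j, x j • Sh (m+1) ^ (m - (j : ℕ)) := by
  ext i k
  rw [Matrix.sum_apply]
  simp only [Matrix.smul_apply, Sh_pow, Bmat]
  have hi := i.isLt
  have hk := k.isLt
  split_ifs with h
  · rw [Finset.sum_eq_single (⟨m + 1 - 1 - i + k, by omega⟩ : Fin (m+1))]
    · rw [if_pos (by simp only []; omega)]; simp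
    · intro b _ hb
      have := b.isLt
      rw [if_neg]; · simp
      intro h2; apply hb; ext; simp only []; omega
    · simp
  · symm; apply Finset.sum_eq_zero
    intro b _
    rw [if_neg (by omega)]; simp

lemma Bmat_comm_of {m : ℕ} (x : Fin (m+1) → ℂ) (M : Matrix (Fin (m+1)) (Fin (m+1)) ℂ)
    (h : Commute M (Sh (m+1))) : Commute M (Bmat x) := by
  rw [Bmat_eq_sum]
  exact Commute.sum_right _ _ _ fun j _ => (h.pow_right _).smul_right _

lemma Bmat_comm_Sh {m : ℕ} (x : Fin (m+1) → ℂ) : Commute (Bmat x) (Sh (m+1)) :=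
  (Bmat_comm_of x _ (Commute.refl _)).symm

lemma Bmat_comm {m : ℕ} (x y : Fin (m+1) → ℂ) : Commute (Bmat x) (Bmat y) :=
  Bmat_comm_of y _ (Bmat_comm_Sh x)

lemma colz_Bmat {m : ℕ} (x : Fin (m+1) → ℂ) : colz (Bmat x) = x := by
  ext j
  simp only [colz, Bmat]
  rw [dif_pos (by simp)]
  congr 1; ext; simp [Fin.val_rev]; omega

lemma eq_of_comm {m : ℕ} (M : Matrix (Fin (m+1)) (Fin (m+1)) ℂ) (h : Commute M (Sh (m+1))) :
    M = Bmat (colz M) := by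
  -- both commute with the shift and have the same first column
  have key : ∀ (N : Matrix (Fin (m+1)) (Fin (m+1)) ℂ), Commute N (Sh (m+1)) →
      (∀ i, N i 0 = 0) → N = 0 := by
    intro N hN h0
    ext i k
    have h1 : (N * Sh (m+1) ^ (k : ℕ)) i 0 = N i k := by
      rw [Matrix.mul_apply]
      simp only [Sh_pow]
      rw [Finset.sum_eq_single k]
      · simp
      · intro b _ hb
        rw [if_neg]; · simp
        intro h2; apply hb; ext; simpa using h2
      · simp
    rw [← h1, (hN.pow_right _).eq, Matrix.mul_apply]
    simp [h0]
  have := key (M - Bmat (colz M)) (h.sub_left (Bmat_comm_Sh _)) (by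
    intro i
    have : colz (Bmat (colz M)) i.rev = colz M i.rev := by rw [colz_Bmat]
    simp only [colz, Fin.rev_rev] at this
    simp only [Matrix.sub_apply]
    rw [sub_eq_zero]; exact this.symm)
  exact sub_eq_zero.mp this

lemma det_Bmat {m : ℕ} (x : Fin (m+1) → ℂ) : (Bmat x).det = x (Fin.last m) ^ (m+1) := by
  rw [Matrix.det_of_isLowerTriangular]
  · have : ∀ i, Bmat x i i = x (Fin.last m) := by
      intro i
      simp only [Bmat]
      rw [dif_pos le_rfl]
      congr 1; ext; simp; omega
    simp [this]
  · intro i j hij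
    simp only [Bmat]
    rw [dif_neg]
    simpa using hij

noncomputable def inv' {m : ℕ} (x : Fin (m+1) → ℂ) : Fin (m+1) → ℂ := colz (Bmat x)⁻¹

lemma isUnit_Bmat {m : ℕ} {x : Fin (m+1) → ℂ} (hx : x (Fin.last m) ≠ 0) : IsUnit (Bmat x).det := by
  rw [det_Bmat]; exact (isUnit_iff_ne_zero.mpr hx).pow _

lemma Bmat_inv {m : ℕ} {x : Fin (m+1) → ℂ} (hx : x (Fin.last m) ≠ 0) :
    Bmat (inv' x) = (Bmat x)⁻¹ := by
  symm; apply eq_of_comm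
  have hu := isUnit_Bmat hx
  have h := (Bmat_comm_Sh x).eq
  show (Bmat x)⁻¹ * Sh (m+1) = Sh (m+1) * (Bmat x)⁻¹
  calc _ = (Bmat x)⁻¹ * Sh (m+1) * (Bmat x * (Bmat x)⁻¹) := by rw [Matrix.mul_nonsing_inv _ hu, mul_one]
    _ = (Bmat x)⁻¹ * (Sh (m+1) * Bmat x) * (Bmat x)⁻¹ := by simp only [mul_assoc]
    _ = ((Bmat x)⁻¹ * Bmat x) * Sh (m+1) * (Bmat x)⁻¹ := by rw [← h]; simp only [mul_assoc]
    _ = _ := by rw [Matrix.nonsing_inv_mul _ hu, one_mul]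

lemma inv'_last {m : ℕ} {x : Fin (m+1) → ℂ} (hx : x (Fin.last m) ≠ 0) :
    inv' x (Fin.last m) = (x (Fin.last m))⁻¹ := by
  have h : Bmat x * Bmat (inv' x) = 1 := by rw [Bmat_inv hx, Matrix.mul_nonsing_inv _ (isUnit_Bmat hx)]
  have h2 := congrFun (congrFun h 0) 0
  rw [Matrix.mul_apply, Finset.sum_eq_single 0] at h2
  · have e : ∀ z : Fin (m+1) → ℂ, Bmat z 0 0 = z (Fin.last m) := by
      intro z; simp only [Bmat]; rw [dif_pos le_rfl]; congr 1
    rw [e, e] at h2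
    simp only [Matrix.one_apply_eq] at h2
    exact eq_inv_of_mul_eq_one_right h2
  · intro b _ hb
    have : Bmat x 0 b = 0 := by
      simp only [Bmat]; rw [dif_neg]
      have := Fin.pos_iff_ne_zero.mpr hb
      exact not_le.mpr this
    rw [this, zero_mul]
  · simp

lemma inv'_inv' {m : ℕ} {x : Fin (m+1) → ℂ} (hx : x (Fin.last m) ≠ 0) : inv' (inv' x) = x := by
  have : inv' (inv' x) = colz (Bmat (inv' x))⁻¹ := rfl
  rw [this, Bmat_inv hx, Matrix.nonsing_inv_nonsing_inv _ (isUnit_Bmat hx), colz_Bmat]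

noncomputable def FF {n : ℕ} (x : Fin n → ℂ) : ℝ := ((1 + Bmat x * (Bmat x)ᴴ).det).re

lemma FF_inv {m : ℕ} {x : Fin (m+1) → ℂ} (hx : x (Fin.last m) ≠ 0) :
    FF (inv' x) = (‖x (Fin.last m)‖ ^ (2 * (m+1)))⁻¹ * FF x := by
  have hu := isUnit_Bmat hx
  have h1 : 1 + Bmat x * (Bmat x)ᴴ = Bmat x * (1 + Bmat (inv' x) * (Bmat (inv' x))ᴴ) * (Bmat x)ᴴ := by
    rw [Bmat_inv hx, mul_add, add_mul, mul_one, ← mul_assoc, Matrix.mul_nonsing_inv _ hu, one_mul,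
      ← Matrix.conjTranspose_mul, Matrix.mul_nonsing_inv _ hu, Matrix.conjTranspose_one]
    exact add_comm _ _
  have h2 : FF x = ‖x (Fin.last m)‖ ^ (2 * (m+1)) * FF (inv' x) := by
    unfold FF
    rw [h1, Matrix.det_mul, Matrix.det_mul, Matrix.det_conjTranspose, det_Bmat, mul_right_comm,
      RCLike.star_def, Complex.mul_conj, Complex.re_ofReal_mul, Complex.normSq_eq_norm_sq, norm_pow]
    ring
  rw [h2, ← mul_assoc, inv_mul_cancel₀, one_mul]
  exact pow_ne_zero _ (norm_ne_zero_iff.mpr hx)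
open scoped MatrixOrder ComplexOrder in
lemma one_le_det_of {n : ℕ} (P : Matrix (Fin n) (Fin n) ℂ) (hP : P.PosSemidef) :
    1 ≤ ((1 + P).det).re ∧ ((1 + P).det).im = 0 := by
  have hH : (1 + P).IsHermitian := Matrix.isHermitian_one.add hP.1
  rw [hH.det_eq_prod_eigenvalues]
  have h1 : ∀ i, 1 ≤ hH.eigenvalues i := by
    intro i
    rw [hH.eigenvalues_eq]
    have h2 := hP.re_dotProduct_nonneg (hH.eigenvectorBasis i).ofLp
    rw [Matrix.add_mulVec, dotProduct_add, Matrix.one_mulVec]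
    have h3 := hH.eigenvectorBasis.orthonormal.1 i
    have h4 : RCLike.re (star ((hH.eigenvectorBasis i).ofLp) ⬝ᵥ (hH.eigenvectorBasis i).ofLp) = (1:ℝ) := by
      have := EuclideanSpace.inner_eq_star_dotProduct (𝕜 := ℂ) (hH.eigenvectorBasis i) (hH.eigenvectorBasis i)
      rw [dotProduct_comm, ← this, inner_self_eq_norm_sq, h3]; norm_num
    rw [map_add, h4]
    linarith
  have h5 : (∏ i, (hH.eigenvalues i : ℂ)) = ((∏ i, hH.eigenvalues i : ℝ) : ℂ) := by simp
  have h6 : (1:ℝ) ≤ ∏ i, hH.eigenvalues i := Finset.prod_induction _ (fun t : ℝ => 1 ≤ t) (fun _ _ h h' => one_le_mul_of_one_le_of_one_le h h') le_rfl (fun i _ => h1 i)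
  erw [h5]
  exact ⟨by rw [Complex.ofReal_re]; exact h6, by rw [Complex.ofReal_im]⟩

open scoped MatrixOrder ComplexOrder in
lemma det_mono {n : ℕ} (A Q : Matrix (Fin n) (Fin n) ℂ) (hA : A.PosDef) (hQ : Q.PosSemidef) :
    A.det.re ≤ (A + Q).det.re := by
  obtain ⟨R, hR⟩ := CStarAlgebra.nonneg_iff_eq_star_mul_self.mp hA.posSemidef.nonneg
  rw [Matrix.star_eq_conjTranspose] at hR
  have hdet : IsUnit A.det := (Matrix.isUnit_iff_isUnit_det _).mp hA.isUnit
  have hu : IsUnit R.det := by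
    rw [hR, Matrix.det_mul] at hdet
    exact isUnit_of_mul_isUnit_right hdet
  have hRi : R * R⁻¹ = 1 := Matrix.mul_nonsing_inv _ hu
  have hRi' : R⁻¹ * R = 1 := Matrix.nonsing_inv_mul _ hu
  have hS := hQ.conjTranspose_mul_mul_same R⁻¹
  have e : A + Q = Rᴴ * (1 + (R⁻¹)ᴴ * Q * R⁻¹) * R := by
    rw [mul_add, add_mul, mul_one, ← hR]
    congr 1
    rw [← mul_assoc, ← mul_assoc, ← Matrix.conjTranspose_mul, hRi', Matrix.conjTranspose_one,
      one_mul, mul_assoc, hRi', mul_one]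
  obtain ⟨h1, h2⟩ := one_le_det_of _ hS
  rw [e, hR, Matrix.det_mul, Matrix.det_mul, Matrix.det_mul, Matrix.det_conjTranspose,
    mul_right_comm, RCLike.star_def, mul_comm ((starRingEnd ℂ) _), Complex.mul_conj, Complex.re_ofReal_mul,
    Complex.ofReal_re]
  nlinarith [Complex.normSq_nonneg R.det]

open scoped MatrixOrder ComplexOrder in
lemma one_le_FF {n : ℕ} (x : Fin n → ℂ) : 1 ≤ FF x :=
  (one_le_det_of _ (Matrix.posSemidef_self_mul_conjTranspose (Bmat x))).1

lemma snoc_diag {m : ℕ} (y : Fin m → ℂ) (z : ℂ) (i : Fin (m+1)) :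
    Bmat (Fin.snoc y z : Fin (m+1) → ℂ) i i = z := by
  have hi := i.isLt
  have : (⟨m + 1 - 1 - i + i, by omega⟩ : Fin (m+1)) = Fin.last m := by ext; simp; omega
  unfold Bmat
  rw [dif_pos le_rfl, this, Fin.snoc_last]

lemma snoc_lower {m : ℕ} (y : Fin m → ℂ) (z : ℂ) (i k : Fin (m+1)) (h : (k:ℕ) < i) :
    Bmat (Fin.snoc y z : Fin (m+1) → ℂ) i k = y ⟨m - i + k, by omega⟩ := by
  have hi := i.isLt
  have : (⟨m + 1 - 1 - i + k, by omega⟩ : Fin (m+1)) = Fin.castSucc ⟨m - i + k, by omega⟩ := by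
    ext; simp
  unfold Bmat
  rw [dif_pos h.le, this, Fin.snoc_castSucc]

lemma Bmat_upper {n : ℕ} (y : Fin n → ℂ) (i k : Fin n) (h : (i:ℕ) < k) :
    Bmat y i k = 0 := by
  unfold Bmat
  rw [dif_neg (by omega)]

lemma FF_snoc_zero {m : ℕ} (y : Fin m → ℂ) : FF (Fin.snoc y 0 : Fin (m+1) → ℂ) = FF y := by
  set A := Bmat (Fin.snoc y 0 : Fin (m+1) → ℂ) with hA
  have hrow : ∀ k, A 0 k = 0 := by
    intro k
    rcases Fin.eq_zero_or_eq_succ k with rfl | ⟨j, rfl⟩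
    · exact snoc_diag _ _ _
    · exact Bmat_upper _ _ _ (by simp)
  have hcol : ∀ i, A i (Fin.last m) = 0 := by
    intro i
    by_cases h : i = Fin.last m
    · subst h; exact snoc_diag _ _ _
    · exact Bmat_upper _ _ _ (by simpa using Fin.val_lt_last h)
  have hmid : ∀ i k : Fin m, A i.succ k.castSucc = Bmat y i k := by
    intro i k
    rcases lt_trichotomy (k:ℕ) (i+1) with h | h | h
    · rw [hA, snoc_lower _ _ _ _ (by simpa using h)]
      unfold Bmat
      rw [dif_pos (by omega)]
      congr 1; ext; simp; omega
    · rw [Bmat_upper y i k (by omega)]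
      have : k.castSucc = i.succ := by ext; simpa using h
      rw [this]; exact snoc_diag _ _ _
    · rw [Bmat_upper y i k (by omega)]
      exact Bmat_upper _ _ _ (by simpa using h)
  unfold FF
  rw [← hA, Matrix.det_succ_row_zero, Finset.sum_eq_single 0]
  · have h00 : (1 + A * Aᴴ) 0 0 = 1 := by
      simp [Matrix.add_apply, Matrix.mul_apply, hrow]
    have : (1 + A * Aᴴ).submatrix Fin.succ (Fin.succAbove 0) = 1 + Bmat y * (Bmat y)ᴴ := by
      ext i l
      simp only [Matrix.submatrix_apply, Matrix.add_apply, Matrix.mul_apply, Fin.sum_univ_castSucc,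
        hcol, Fin.succAbove_zero, hmid, Matrix.conjTranspose_apply, Matrix.one_apply,
        Fin.succ_inj, zero_mul, add_zero]
    rw [this, h00]; simp
  · intro b _ hb
    have : (1 + A * Aᴴ) 0 b = 0 := by
      simp [Matrix.add_apply, Matrix.mul_apply, hrow, hb.symm]
    rw [this]; simp
  · simp

open scoped MatrixOrder ComplexOrder in
lemma FF_lower {m : ℕ} (y : Fin m → ℂ) (z : ℂ) (hz : ‖z‖ ≤ 1) :
    FF y ≤ 3 ^ (m+1) * FF (Fin.snoc y z : Fin (m+1) → ℂ) := by
  rw [← FF_snoc_zero]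
  unfold FF
  set A := Bmat (Fin.snoc y 0 : Fin (m+1) → ℂ) with hA
  set B := Bmat (Fin.snoc y z : Fin (m+1) → ℂ) with hB
  have hAB : A = B - z • (1 : Matrix (Fin (m+1)) (Fin (m+1)) ℂ) := by
    ext i k
    simp only [Matrix.sub_apply, Matrix.smul_apply, Matrix.one_apply]
    rcases lt_trichotomy (k:ℕ) i with h | h | h
    · rw [hA, hB, snoc_lower _ _ _ _ h, snoc_lower _ _ _ _ h, if_neg]
      · simp
      · intro h2; subst h2; omega
    · have : k = i := Fin.ext h
      subst this
      rw [hA, hB, snoc_diag, snoc_diag]; simp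
    · rw [hA, hB, Bmat_upper _ _ _ h, Bmat_upper _ _ _ h, if_neg]
      · simp
      · intro h2; subst h2; omega
  have e : (3:ℂ) • (1 + B * Bᴴ) = (1 + A * Aᴴ) + (B * Bᴴ + (B + z • 1) * (B + z • 1)ᴴ
      + (2 - 2 * (z * star z)) • (1 : Matrix (Fin (m+1)) (Fin (m+1)) ℂ)) := by
    rw [hAB]
    simp only [Matrix.conjTranspose_sub, Matrix.conjTranspose_add, Matrix.conjTranspose_smul,
      Matrix.conjTranspose_one, mul_add, add_mul, mul_sub, sub_mul, smul_mul_assoc, mul_smul_comm,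
      one_mul, mul_one]
    module
  have hP : (1 + A * Aᴴ).PosDef := Matrix.PosDef.one.add_posSemidef (Matrix.posSemidef_self_mul_conjTranspose A)
  have hQ : (B * Bᴴ + (B + z • 1) * (B + z • 1)ᴴ
      + (2 - 2 * (z * star z)) • (1 : Matrix (Fin (m+1)) (Fin (m+1)) ℂ)).PosSemidef := by
    refine ((Matrix.posSemidef_self_mul_conjTranspose B).add
      (Matrix.posSemidef_self_mul_conjTranspose _)).add (Matrix.PosSemidef.one.smul ?_)
    rw [RCLike.star_def, Complex.mul_conj, Complex.normSq_eq_norm_sq]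
    have : (0:ℝ) ≤ 2 - 2 * ‖z‖^2 := by nlinarith [norm_nonneg z]
    exact_mod_cast this
  have := det_mono _ _ hP hQ
  rw [← e, Matrix.det_smul] at this
  simp only [Fintype.card_fin] at this
  have h3 : ((3:ℂ)^(m+1)) = (((3:ℝ)^(m+1) : ℝ) : ℂ) := by push_cast; rfl
  rwa [h3, Complex.re_ofReal_mul] at this
noncomputable def Blin (m : ℕ) : (Fin (m+1) → ℂ) →ₗ[ℂ] Matrix (Fin (m+1)) (Fin (m+1)) ℂ where
  toFun := Bmat
  map_add' x y := by
    ext i k; simp only [Bmat, Matrix.add_apply]; split_ifs <;> simp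
  map_smul' c x := by
    ext i k; simp only [Bmat, Matrix.smul_apply]; split_ifs <;> simp

noncomputable def Clin (m : ℕ) : Matrix (Fin (m+1)) (Fin (m+1)) ℂ →ₗ[ℂ] (Fin (m+1) → ℂ) where
  toFun := colz
  map_add' _ _ := rfl
  map_smul' _ _ := rfl

noncomputable def Dlin {m : ℕ} (x : Fin (m+1) → ℂ) : (Fin (m+1) → ℂ) →ₗ[ℂ] (Fin (m+1) → ℂ) :=
  Matrix.toLin' (-((Bmat (inv' x) * Bmat (inv' x)).submatrix (Fin.revPerm) (Fin.revPerm)))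

lemma Dlin_apply {m : ℕ} (x h : Fin (m+1) → ℂ) :
    Dlin x h = - colz (Bmat (inv' x) * Bmat h * Bmat (inv' x)) := by
  rw [mul_assoc, (Bmat_comm h (inv' x)).eq, ← mul_assoc]
  ext j
  simp only [Dlin, Matrix.toLin'_apply, Matrix.neg_mulVec, Pi.neg_apply, colz]
  congr 1
  rw [Matrix.mul_apply]
  simp only [Matrix.mulVec, dotProduct, Matrix.submatrix_apply]
  rw [← Equiv.sum_comp Fin.revPerm]
  apply Finset.sum_congr rfl
  intro k _
  have : colz (Bmat h) k.rev = h k.rev := by rw [colz_Bmat]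
  simp only [colz, Fin.rev_rev] at this
  simp [this]

section
attribute [local instance] Matrix.linftyOpNormedRing Matrix.linftyOpNormedAlgebra

lemma hasFDerivAt_Binv {m : ℕ} {x : Fin (m+1) → ℂ} (hx : x (Fin.last m) ≠ 0) :
    HasFDerivAt inv' (LinearMap.toContinuousLinearMap (Dlin x)) x := by
  have hu := (Matrix.isUnit_iff_isUnit_det _).mpr (isUnit_Bmat hx)
  obtain ⟨u, hu'⟩ := hu
  have hB : HasFDerivAt (Bmat : (Fin (m+1) → ℂ) → _) (LinearMap.toContinuousLinearMap (Blin m)) x :=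
    (LinearMap.toContinuousLinearMap (Blin m)).hasFDerivAt
  have hI := hasFDerivAt_ringInverse (𝕜 := ℂ) u
  rw [hu'] at hI
  have hC := (LinearMap.toContinuousLinearMap (Clin m)).hasFDerivAt (x := Ring.inverse (Bmat x))
  have h := hC.comp x (hI.comp x hB)
  have hinv : ((u⁻¹ : (Matrix (Fin (m+1)) (Fin (m+1)) ℂ)ˣ) : Matrix (Fin (m+1)) (Fin (m+1)) ℂ) = Bmat (inv' x) := by
    rw [Bmat_inv hx, ← hu', Matrix.coe_units_inv]
  refine (h.congr_fderiv ?_).congr_of_eventuallyEq ?_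
  · ext1 v
    rw [hinv]
    exact (Dlin_apply x v).symm
  · refine Filter.Eventually.of_forall fun y => ?_
    simp only [Function.comp, inv']
    rw [Matrix.nonsing_inv_eq_ringInverse]
    rfl
end

lemma abs_det_D {m : ℕ} {x : Fin (m+1) → ℂ} (hx : x (Fin.last m) ≠ 0) :
    |((LinearMap.toContinuousLinearMap (Dlin x)).restrictScalars ℝ).det| =
      (‖x (Fin.last m)‖ ^ (4 * (m+1)))⁻¹ := by
  have h1 : ((LinearMap.toContinuousLinearMap (Dlin x)).restrictScalars ℝ).det
     = LinearMap.det ((Dlin x).restrictScalars ℝ) := rfl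
  rw [h1, LinearMap.det_restrictScalars, Algebra.norm_complex_apply, Dlin, LinearMap.det_toLin',
    Matrix.det_neg, Matrix.det_submatrix_equiv_self, Matrix.det_mul, det_Bmat, inv'_last hx,
    Complex.normSq_eq_norm_sq]
  simp only [norm_mul, norm_pow, norm_neg, norm_one, one_pow, one_mul, norm_inv, abs_pow, abs_mul, abs_inv, abs_norm]
  rw [← pow_add, ← pow_mul, inv_pow]
  congr 2; ring

lemma inv'_image {m : ℕ} :
    inv' '' {y : Fin (m+1) → ℂ | y (Fin.last m) ≠ 0 ∧ ‖y (Fin.last m)‖ < 1} =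
      {x | 1 < ‖x (Fin.last m)‖} := by
  ext x
  constructor
  · rintro ⟨y, ⟨h0, h1⟩, rfl⟩
    simp only [Set.mem_ofPred_eq, inv'_last h0, norm_inv]
    exact (one_lt_inv₀ (norm_pos_iff.mpr h0)).mpr h1
  · intro hx
    simp only [Set.mem_ofPred_eq] at hx
    have hx0 : x (Fin.last m) ≠ 0 := by
      intro h; rw [h] at hx; simp at hx; linarith
    refine ⟨inv' x, ⟨?_, ?_⟩, inv'_inv' hx0⟩
    · rw [inv'_last hx0]; exact inv_ne_zero hx0
    · rw [inv'_last hx0, norm_inv]; exact inv_lt_one_of_one_lt₀ hx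

lemma measU {m : ℕ} : MeasurableSet {y : Fin (m+1) → ℂ | y (Fin.last m) ≠ 0 ∧ ‖y (Fin.last m)‖ < 1} := by
  have h1 : Measurable fun y : Fin (m+1) → ℂ => y (Fin.last m) := measurable_pi_apply _
  exact ((measurableSet_singleton (0:ℂ)).compl.preimage h1).inter (measurableSet_lt h1.norm measurable_const)

lemma cov {m : ℕ} (p : ℝ) :
    ∫⁻ x in {x : Fin (m+1) → ℂ | 1 < ‖x (Fin.last m)‖}, ENNReal.ofReal (FF x ^ (-p)) =
    ∫⁻ y in {y : Fin (m+1) → ℂ | y (Fin.last m) ≠ 0 ∧ ‖y (Fin.last m)‖ < 1},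
      ENNReal.ofReal (‖y (Fin.last m)‖ ^ (2 * (m+1) * p - 4 * (m+1)) * FF y ^ (-p)) := by
  rw [← inv'_image, lintegral_image_eq_lintegral_abs_det_fderiv_mul volume measU
    (f' := fun x => (LinearMap.toContinuousLinearMap (Dlin x)).restrictScalars ℝ)]
  · apply setLIntegral_congr_fun measU
    intro y hy
    have hpos := norm_pos_iff.mpr hy.1
    simp only
    rw [abs_det_D hy.1, FF_inv hy.1, ← ENNReal.ofReal_mul (by positivity)]
    congr 1
    rw [Real.mul_rpow (by positivity) (zero_le_one.trans (one_le_FF y)), ← mul_assoc]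
    congr 1
    rw [Real.rpow_neg (by positivity), Real.inv_rpow (by positivity), inv_inv,
      ← Real.rpow_natCast, ← Real.rpow_natCast, ← Real.rpow_neg hpos.le, ← Real.rpow_mul hpos.le,
      ← Real.rpow_add hpos]
    congr 1; push_cast; ring
  · intro y hy
    exact ((hasFDerivAt_Binv hy.1).restrictScalars ℝ).hasFDerivWithinAt
  · intro a ha b hb h
    rw [← inv'_inv' ha.1, h, inv'_inv' hb.1]
lemma cont_FF (n : ℕ) : Continuous (FF : (Fin n → ℂ) → ℝ) := by
  have hB : Continuous (Bmat : (Fin n → ℂ) → Matrix (Fin n) (Fin n) ℂ) := by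
    refine continuous_matrix fun i k => ?_
    unfold Bmat
    split_ifs
    · exact continuous_apply _
    · exact continuous_const
  unfold FF
  exact Complex.continuous_re.comp
    ((continuous_const.add (hB.matrix_mul hB.matrix_conjTranspose)).matrix_det)

lemma cont_FFp (n : ℕ) (p : ℝ) : Continuous (fun x : Fin n → ℂ => FF x ^ (-p)) :=
  (cont_FF n).rpow_const fun x => Or.inl (zero_lt_one.trans_le (one_le_FF x)).ne'

lemma zint (s : ℝ) : ∫⁻ z : ℂ, (Set.indicator {z : ℂ | z ≠ 0 ∧ ‖z‖ < 1}
    (fun z => ENNReal.ofReal (‖z‖ ^ s))) z < ⊤ ↔ -2 < s := by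
  have hf := integrable_fun_norm_addHaar (volume : Measure ℂ)
    (f := Set.indicator (Set.Ioo 0 1) (fun r : ℝ => r ^ s))
  have h1 : IntegrableOn (fun y : ℝ ↦ y ^ (Module.finrank ℝ ℂ - 1) • 
      Set.indicator (Set.Ioo 0 1) (fun r : ℝ => r ^ s) y) (Set.Ioi 0) ↔ -2 < s := by
    have : (fun y : ℝ ↦ y ^ (Module.finrank ℝ ℂ - 1) • 
      Set.indicator (Set.Ioo 0 1) (fun r : ℝ => r ^ s) y) = 
      Set.indicator (Set.Ioo 0 1) (fun r : ℝ => r ^ (s+1)) := by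
      ext y
      by_cases hy : y ∈ Set.Ioo (0:ℝ) 1
      · simp only [Set.indicator_of_mem hy, Complex.finrank_real_complex, smul_eq_mul]
        rw [Real.rpow_add hy.1, mul_comm]; simp
      · simp [Set.indicator_of_notMem hy]
    rw [this, IntegrableOn, integrable_indicator_iff measurableSet_Ioo, IntegrableOn,
      Measure.restrict_restrict measurableSet_Ioo,
      Set.inter_eq_left.mpr Set.Ioo_subset_Ioi_self, ← IntegrableOn,
      intervalIntegral.integrableOn_Ioo_rpow_iff zero_lt_one]
    constructor <;> intro h <;> linarith
  rw [← h1, ← hf]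
  have hm : Measurable (fun z : ℂ => Set.indicator (Set.Ioo 0 1) (fun r : ℝ => r ^ s) ‖z‖) := by
    refine Measurable.comp (g := Set.indicator (Set.Ioo 0 1) (fun r : ℝ => r ^ s)) ?_ measurable_norm
    exact (measurable_id.pow_const s).indicator measurableSet_Ioo
  have hnn : ∀ z : ℂ, 0 ≤ Set.indicator (Set.Ioo 0 1) (fun r : ℝ => r ^ s) ‖z‖ := fun z =>
    Set.indicator_nonneg (fun r hr => Real.rpow_nonneg hr.1.le _) _
  rw [← lintegral_ofReal_ne_top_iff_integrable hm.aestronglyMeasurable (Filter.Eventually.of_forall hnn),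
    lt_top_iff_ne_top]
  have : ∀ z : ℂ, (Set.indicator {z : ℂ | z ≠ 0 ∧ ‖z‖ < 1} (fun z => ENNReal.ofReal (‖z‖ ^ s))) z
    = ENNReal.ofReal (Set.indicator (Set.Ioo 0 1) (fun r : ℝ => r ^ s) ‖z‖) := by
    intro z
    by_cases h : z ≠ 0 ∧ ‖z‖ < 1
    · rw [Set.indicator_of_mem (show z ∈ {z : ℂ | z ≠ 0 ∧ ‖z‖ < 1} from h), 
        Set.indicator_of_mem (show ‖z‖ ∈ Set.Ioo (0:ℝ) 1 from ⟨norm_pos_iff.mpr h.1, h.2⟩)]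
    · rw [Set.indicator_of_notMem (show z ∉ {z : ℂ | z ≠ 0 ∧ ‖z‖ < 1} from h), 
        Set.indicator_of_notMem, ENNReal.ofReal_zero]
      intro h2; exact h ⟨norm_pos_iff.mp h2.1, h2.2⟩
  simp only [this]

lemma lint_snoc {m : ℕ} (g : (Fin (m+1) → ℂ) → ENNReal) (hg : Measurable g) :
    ∫⁻ x, g x = ∫⁻ z : ℂ, ∫⁻ y : Fin m → ℂ, g (Fin.snoc y z : Fin (m+1) → ℂ) := by
  have h := (volume_preserving_piFinSuccAbove (fun _ : Fin (m+1) => ℂ) (Fin.last m)).symm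
  rw [← h.lintegral_comp hg, Measure.volume_eq_prod, lintegral_prod]
  · simp [MeasurableEquiv.piFinSuccAbove, Fin.insertNthEquiv]
  · exact (hg.comp (MeasurableEquiv.measurable _)).aemeasurable

lemma upper {m : ℕ} {p : ℝ} (hp : 0 ≤ p) (w : ℂ → ENNReal) (hw : Measurable w)
    (hs : ∀ z, 1 < ‖z‖ → w z = 0) :
    ∫⁻ x : Fin (m+1) → ℂ, w (x (Fin.last m)) * ENNReal.ofReal (FF x ^ (-p)) ≤
    (∫⁻ z, w z) * (ENNReal.ofReal ((3 ^ (m+1)) ^ p) * ∫⁻ y : Fin m → ℂ, ENNReal.ofReal (FF y ^ (-p))) := by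
  rw [lint_snoc]
  swap
  · exact (hw.comp (measurable_pi_apply _)).mul (cont_FFp _ p).measurable.ennreal_ofReal
  rw [← lintegral_mul_const _ hw]
  refine lintegral_mono fun z => ?_
  by_cases hz : 1 < ‖z‖
  · simp [hs z hz]
  simp only [Fin.snoc_last]
  rw [← lintegral_const_mul _ (cont_FFp m p).measurable.ennreal_ofReal, lintegral_const_mul]
  swap
  · have : Continuous fun y : Fin m → ℂ => (Fin.snoc y z : Fin (m+1) → ℂ) := by fun_prop
    exact ((cont_FFp _ p).comp this).measurable.ennreal_ofReal
  gcongr with y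
  rw [← ENNReal.ofReal_mul (by positivity)]
  apply ENNReal.ofReal_le_ofReal
  have h0 := one_le_FF y
  have h1 := one_le_FF (Fin.snoc y z : Fin (m+1) → ℂ)
  have h2 := FF_lower y z (not_lt.mp hz)
  have h3 : FF y ^ p ≤ (3^(m+1))^p * FF (Fin.snoc y z : Fin (m+1) → ℂ) ^ p := by
    rw [← Real.mul_rpow (by positivity) (by linarith)]
    exact Real.rpow_le_rpow (by linarith) h2 hp
  rw [Real.rpow_neg (by linarith), Real.rpow_neg (by linarith), ← div_eq_mul_inv,
    le_div_iff₀ (by positivity), inv_mul_le_iff₀ (by positivity)]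
  linarith

lemma lower {m : ℕ} (p : ℝ) (w : ℂ → ENNReal) (hw : Measurable w)
    (hs : ∀ z, 1 < ‖z‖ → w z = 0) :
    ∃ c : ENNReal, c ≠ 0 ∧ (∫⁻ z, w z) * c ≤ 
    ∫⁻ x : Fin (m+1) → ℂ, w (x (Fin.last m)) * ENNReal.ofReal (FF x ^ (-p)) := by
  obtain ⟨x0, -, hx0⟩ := (isCompact_closedBall (0 : Fin (m+1) → ℂ) 1).exists_isMinOn
    ⟨0, by simp⟩ (cont_FFp (m+1) p).continuousOn
  set c0 := FF x0 ^ (-p) with hc0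
  have hc0p : 0 < c0 := Real.rpow_pos_of_pos (zero_lt_one.trans_le (one_le_FF x0)) _
  refine ⟨ENNReal.ofReal c0 * volume (Metric.closedBall (0 : Fin m → ℂ) 1), ?_, ?_⟩
  · exact mul_ne_zero (by simpa using hc0p) (Metric.measure_closedBall_pos _ _ one_pos).ne'
  rw [lint_snoc]
  swap
  · exact (hw.comp (measurable_pi_apply _)).mul (cont_FFp _ p).measurable.ennreal_ofReal
  rw [← lintegral_mul_const _ hw]
  refine lintegral_mono fun z => ?_
  by_cases hz : 1 < ‖z‖
  · simp [hs z hz]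
  simp only [Fin.snoc_last]
  rw [lintegral_const_mul]
  swap
  · have : Continuous fun y : Fin m → ℂ => (Fin.snoc y z : Fin (m+1) → ℂ) := by fun_prop
    exact ((cont_FFp _ p).comp this).measurable.ennreal_ofReal
  gcongr
  rw [← setLIntegral_const]
  refine (setLIntegral_mono' measurableSet_closedBall fun y hy => ?_).trans (setLIntegral_le_lintegral _ _)
  apply ENNReal.ofReal_le_ofReal
  apply hx0
  rw [mem_closedBall_zero_iff, pi_norm_le_iff_of_nonneg zero_le_one] at hy ⊢
  intro i
  refine Fin.lastCases ?_ (fun j => ?_) i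
  · simpa using hz
  · simpa using hy j

lemma cov_w {m : ℕ} (p : ℝ) :
    ∫⁻ x in {x : Fin (m+1) → ℂ | 1 < ‖x (Fin.last m)‖}, ENNReal.ofReal (FF x ^ (-p)) =
    ∫⁻ y : Fin (m+1) → ℂ, (Set.indicator {z : ℂ | z ≠ 0 ∧ ‖z‖ < 1}
      (fun z => ENNReal.ofReal (‖z‖ ^ (2 * (m+1) * p - 4 * (m+1))))) (y (Fin.last m)) *
      ENNReal.ofReal (FF y ^ (-p)) := by
  rw [cov, ← lintegral_indicator measU]
  refine lintegral_congr fun y => ?_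
  by_cases h : y (Fin.last m) ≠ 0 ∧ ‖y (Fin.last m)‖ < 1
  · rw [Set.indicator_of_mem (by exact h), Set.indicator_of_mem (by exact h), ENNReal.ofReal_mul (by positivity)]
  · rw [Set.indicator_of_notMem (by exact h), Set.indicator_of_notMem (by exact h), zero_mul]

lemma w_meas (s : ℝ) : Measurable (Set.indicator {z : ℂ | z ≠ 0 ∧ ‖z‖ < 1}
      (fun z => ENNReal.ofReal (‖z‖ ^ s))) := by
  refine Measurable.indicator (measurable_norm.pow_const s).ennreal_ofReal ?_
  exact (measurableSet_singleton (0:ℂ)).compl.inter (measurableSet_lt measurable_norm measurable_const)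

lemma w_supp (s : ℝ) (z : ℂ) (hz : 1 < ‖z‖) : (Set.indicator {z : ℂ | z ≠ 0 ∧ ‖z‖ < 1}
      (fun z => ENNReal.ofReal (‖z‖ ^ s))) z = 0 :=
  Set.indicator_of_notMem (fun h => absurd h.2 (by linarith)) _

lemma suff (m : ℕ) (p : ℝ) (hp : (m : ℝ) * p > 2 * m - 1) (hp0 : 0 ≤ p) :
    ∫⁻ x : Fin m → ℂ, ENNReal.ofReal (FF x ^ (-p)) < ⊤ := by
  induction m with
  | zero =>
    rw [lintegral_unique]
    refine ENNReal.mul_lt_top ENNReal.ofReal_lt_top ?_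
    simp [volume_pi]
  | succ m ih =>
    push_cast at hp
    have hm : (0:ℝ) ≤ m := Nat.cast_nonneg m
    have ih' := ih (by nlinarith)
    set S := {x : Fin (m+1) → ℂ | 1 < ‖x (Fin.last m)‖} with hS
    have hSm : MeasurableSet S := measurableSet_lt measurable_const (measurable_pi_apply _).norm
    rw [← lintegral_add_compl _ hSm]
    have fin : ENNReal.ofReal ((3 ^ (m+1)) ^ p) * ∫⁻ y : Fin m → ℂ, ENNReal.ofReal (FF y ^ (-p)) < ⊤ :=
      ENNReal.mul_lt_top ENNReal.ofReal_lt_top ih'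
    refine ENNReal.add_lt_top.mpr ⟨?_, ?_⟩
    · rw [cov_w]
      refine (upper hp0 _ (w_meas _) (w_supp _)).trans_lt (ENNReal.mul_lt_top ?_ fin)
      rw [zint]
      nlinarith
    · have hw : Measurable (Set.indicator {z : ℂ | ‖z‖ ≤ 1} (fun _ => (1 : ENNReal))) :=
        measurable_const.indicator (measurableSet_le measurable_norm measurable_const)
      have := upper (m := m) hp0 _ hw (fun z hz => Set.indicator_of_notMem (by simpa using hz) _)
      rw [← lintegral_indicator hSm.compl]
      refine lt_of_le_of_lt (lintegral_mono fun x => ?_) (this.trans_lt (ENNReal.mul_lt_top ?_ fin))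
      · by_cases h : 1 < ‖x (Fin.last m)‖
        · rw [Set.indicator_of_notMem (by simpa [hS] using h)]; exact zero_le
        · rw [Set.indicator_of_mem (by simpa [hS] using h), Set.indicator_of_mem (by simpa using h), one_mul]
      · rw [lintegral_indicator (measurableSet_le measurable_norm measurable_const)]
        have : {z : ℂ | ‖z‖ ≤ 1} = Metric.closedBall 0 1 := by ext; simp
        rw [this]
        simp

lemma nec (m : ℕ) (p : ℝ) 
    (h : ∫⁻ x : Fin (m+1) → ℂ, ENNReal.ofReal (FF x ^ (-p)) < ⊤) :
    ((m+1 : ℕ) : ℝ) * p > 2 * (m+1 : ℕ) - 1 := by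
  have h1 := (setLIntegral_le_lintegral {x : Fin (m+1) → ℂ | 1 < ‖x (Fin.last m)‖} _).trans_lt h
  rw [cov_w] at h1
  obtain ⟨c, hc, hle⟩ := lower (m := m) p _ (w_meas (2 * (m+1) * p - 4 * (m+1))) (w_supp _)
  have h2 := hle.trans_lt h1
  have h3 := (zint (2 * (m+1) * p - 4 * (m+1))).mp (ENNReal.lt_top_of_mul_ne_top_left h2.ne hc)
  push_cast
  linarith

/-- `x ↦ det(1 + B(x)B(x)*)^{-p}` is Lebesgue-integrable on `ℂⁿ` iff `p > 2 − 1/n`. -/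
theorem stmt1 (n : ℕ) (hn : 1 ≤ n) (p : ℝ) :
    Integrable (fun x : Fin n → ℂ => ((1 + Bmat x * (Bmat x)ᴴ).det).re ^ (-p)) volume
      ↔ p > 2 - 1 / (n : ℝ) := by
  obtain ⟨m, rfl⟩ : ∃ m, n = m + 1 := ⟨n - 1, by omega⟩
  have e : (∫⁻ x : Fin (m+1) → ℂ, ENNReal.ofReal (FF x ^ (-p)) < ⊤) ↔ 
      Integrable (fun x : Fin (m+1) → ℂ => ((1 + Bmat x * (Bmat x)ᴴ).det).re ^ (-p)) volume := by
    rw [lt_top_iff_ne_top]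
    exact lintegral_ofReal_ne_top_iff_integrable (cont_FFp _ p).aestronglyMeasurable
      (Filter.Eventually.of_forall fun x => Real.rpow_nonneg (zero_le_one.trans (one_le_FF x)) _)
  have hpos : (0:ℝ) < ((m+1 : ℕ) : ℝ) := by positivity
  have key : p > 2 - 1 / ((m+1 : ℕ) : ℝ) ↔ ((m+1 : ℕ) : ℝ) * p > 2 * (m+1 : ℕ) - 1 := by
    have : 2 - 1 / ((m+1 : ℕ) : ℝ) = (2 * (m+1 : ℕ) - 1) / ((m+1 : ℕ) : ℝ) := by field_simp
    rw [this, gt_iff_lt, div_lt_iff₀ hpos, mul_comm p]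
  rw [← e, key]
  refine ⟨nec m p, fun h => suff _ p h ?_⟩
  have h1 : (1:ℝ) ≤ ((m+1 : ℕ) : ℝ) := by exact_mod_cast hn
  by_contra hneg
  nlinarith
end

section
/- Let n ≥ 1 and define W_n ∈ M₂(ℂ[z, z⁻¹]) by W_n = (z^m, 0; 0, z^{−m}) if n = 2m is even, and W_n = (0, z^{−m−1}; z^{m+1}, 0) if n = 2m+1 is odd. Let v ∈ M₂(ℂ[z, z⁻¹]) with det v = 1 and suppose: (i) every entry of v has only terms of nonpositive degree in z, the z⁰-coefficients of both diagonal entries of v equal 1, and the z⁰-coefficient of the upper-right entry of v equals 0; (ii) every entry of W_n · v · W_n^{−1} has only terms of nonnegative degree in z, the z⁰-coefficients of both diagonal entries of W_n · v · W_n^{−1} equal 1, and the z⁰-coefficient of its lower-left entry equals 0. Then v = (1, Σ_{j=1}^{n} x_j z^{−j}; 0, 1) for some (unique) x_1, …, x_n ∈ ℂ. Conversely, every matrix of this form has determinant 1 and satisfies (i) and (ii). -/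
open Matrix

/-- `W_n`: the diagonal (resp. antidiagonal) representative `diag(z^m, z^{-m})` for `n = 2m`
and `(0, z^{-m-1}; z^{m+1}, 0)` for `n = 2m+1`, as a matrix over Laurent series. -/
noncomputable def Wmat (n : ℕ) : Matrix (Fin 2) (Fin 2) (LaurentSeries ℂ) :=
  if n % 2 = 0 then
    !![HahnSeries.single ((n / 2 : ℕ) : ℤ) 1, 0;
       0, HahnSeries.single (-((n / 2 : ℕ) : ℤ)) 1]
  else
    !![0, HahnSeries.single (-((n / 2 : ℕ) : ℤ) - 1) 1;
       HahnSeries.single (((n / 2 : ℕ) : ℤ) + 1) 1, 0]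

lemma conj_diag {R : Type*} [CommRing R] (p q : R) (e : p * q = 1) (v : Matrix (Fin 2) (Fin 2) R) :
    !![p, 0; 0, q] * v * !![q, 0; 0, p] = !![v 0 0, p * p * v 0 1; q * q * v 1 0, v 1 1] := by
  rw [Matrix.eta_fin_two v, Matrix.mul_fin_two, Matrix.mul_fin_two]
  ext1 i j
  fin_cases i <;> fin_cases j <;> simp
  · linear_combination v 0 0 * e
  · ring
  · ring
  · linear_combination v 1 1 * e

lemma conj_anti {R : Type*} [CommRing R] (p q : R) (e : p * q = 1) (v : Matrix (Fin 2) (Fin 2) R) :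
    !![0, q; p, 0] * v * !![0, q; p, 0] = !![v 1 1, q * q * v 1 0; p * p * v 0 1, v 0 0] := by
  rw [Matrix.eta_fin_two v, Matrix.mul_fin_two, Matrix.mul_fin_two]
  ext1 i j
  fin_cases i <;> fin_cases j <;> simp
  · linear_combination v 1 1 * e
  · ring
  · ring
  · linear_combination v 0 0 * e

lemma Wconj_even (n : ℕ) (h : n % 2 = 0) (v : Matrix (Fin 2) (Fin 2) (LaurentSeries ℂ)) :
    Wmat n * v * (Wmat n)⁻¹ = !![v 0 0, HahnSeries.single (n : ℤ) 1 * v 0 1;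
      HahnSeries.single (-(n : ℤ)) 1 * v 1 0, v 1 1] := by
  obtain ⟨m, rfl⟩ : ∃ m, n = 2 * m := ⟨n / 2, by omega⟩
  have hm : 2 * m / 2 = m := by omega
  have hinv : (Wmat (2 * m))⁻¹ = !![HahnSeries.single (-(m : ℤ)) 1, 0;
       0, HahnSeries.single (m : ℤ) 1] := by
    apply Matrix.inv_eq_right_inv
    simp [Wmat, hm, Matrix.one_fin_two]
  have e1 : (HahnSeries.single (((2 * m : ℕ) : ℤ)) (1 : ℂ))
      = HahnSeries.single (m : ℤ) 1 * HahnSeries.single (m : ℤ) 1 := by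
    rw [HahnSeries.single_mul_single]; simp only [mul_one]; congr 2; push_cast; ring
  have e2 : (HahnSeries.single (-((2 * m : ℕ) : ℤ)) (1 : ℂ))
      = HahnSeries.single (-(m : ℤ)) 1 * HahnSeries.single (-(m : ℤ)) 1 := by
    rw [HahnSeries.single_mul_single]; simp only [mul_one]; congr 2; push_cast; ring
  have e3 : (HahnSeries.single (m : ℤ) (1 : ℂ)) * HahnSeries.single (-(m : ℤ)) 1 = 1 := by
    rw [HahnSeries.single_mul_single]; simp
  have hW : Wmat (2 * m) = !![HahnSeries.single (m : ℤ) 1, 0;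
       0, HahnSeries.single (-(m : ℤ)) 1] := by
    simp [Wmat, hm]
  rw [hinv, hW, e1, e2]
  exact conj_diag _ _ e3 v

lemma Wconj_odd (n : ℕ) (h : n % 2 = 1) (v : Matrix (Fin 2) (Fin 2) (LaurentSeries ℂ)) :
    Wmat n * v * (Wmat n)⁻¹ = !![v 1 1, HahnSeries.single (-(n : ℤ) - 1) 1 * v 1 0;
      HahnSeries.single ((n : ℤ) + 1) 1 * v 0 1, v 0 0] := by
  obtain ⟨m, rfl⟩ : ∃ m, n = 2 * m + 1 := ⟨n / 2, by omega⟩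
  have hm : (2 * m + 1) / 2 = m := by omega
  have hm2 : (2 * m + 1) % 2 = 1 := by omega
  have e3 : (HahnSeries.single ((m : ℤ) + 1) (1 : ℂ)) * HahnSeries.single (-(m : ℤ) - 1) 1 = 1 := by
    rw [HahnSeries.single_mul_single]; simp
  have hW : Wmat (2 * m + 1) = !![0, HahnSeries.single (-(m : ℤ) - 1) 1;
       HahnSeries.single ((m : ℤ) + 1) 1, 0] := by
    simp only [Wmat, hm, hm2]; simp
  have hinv : (Wmat (2 * m + 1))⁻¹ = !![0, HahnSeries.single (-(m : ℤ) - 1) 1;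
       HahnSeries.single ((m : ℤ) + 1) 1, 0] := by
    apply Matrix.inv_eq_right_inv
    rw [hW]
    simp [Matrix.one_fin_two]
  have e1 : (HahnSeries.single (((2 * m + 1 : ℕ) : ℤ) + 1) (1 : ℂ))
      = HahnSeries.single ((m : ℤ) + 1) 1 * HahnSeries.single ((m : ℤ) + 1) 1 := by
    rw [HahnSeries.single_mul_single]; simp only [mul_one]; congr 2; push_cast; ring
  have e2 : (HahnSeries.single (-((2 * m + 1 : ℕ) : ℤ) - 1) (1 : ℂ))
      = HahnSeries.single (-(m : ℤ) - 1) 1 * HahnSeries.single (-(m : ℤ) - 1) 1 := by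
    rw [HahnSeries.single_mul_single]; simp only [mul_one]; congr 2; push_cast; ring
  rw [hinv, hW, e1, e2]
  exact conj_anti _ _ e3 v

lemma coeff_sm (a k : ℤ) (f : LaurentSeries ℂ) :
    (HahnSeries.single a (1 : ℂ) * f).coeff k = f.coeff (k - a) := by
  have := HahnSeries.coeff_single_mul_add (r := (1 : ℂ)) (x := f) (a := k - a) (b := a)
  simpa using this

lemma coeff_S (n : ℕ) (x : Fin n → ℂ) (k : ℤ) :
    (∑ j : Fin n, HahnSeries.single (-((j : ℕ) : ℤ) - 1) (x j) : LaurentSeries ℂ).coeff k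
      = if h : 0 < -k ∧ -k ≤ n then x ⟨(-k - 1).toNat, by omega⟩ else 0 := by
  rw [HahnSeries.coeff_sum]
  simp only [HahnSeries.coeff_single]
  split_ifs with h
  · rw [Finset.sum_eq_single ⟨(-k - 1).toNat, by omega⟩]
    · rw [if_pos]; simp only []; omega
    · intro b _ hb
      rw [if_neg]
      intro hk
      apply hb
      ext
      simp only []
      omega
    · simp
  · apply Finset.sum_eq_zero
    intro j _
    rw [if_neg]
    have := j.2
    omega

/-- Conditions in degreewise form. -/
lemma core (n : ℕ) (v : Matrix (Fin 2) (Fin 2) (LaurentSeries ℂ)) :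
    (∃! x : Fin n → ℂ,
        v = !![1, ∑ j : Fin n, HahnSeries.single (-((j : ℕ) : ℤ) - 1) (x j); 0, 1]) ↔
    (v 0 0 = 1 ∧ v 1 1 = 1 ∧ v 1 0 = 0 ∧ ∀ k : ℤ, (0 ≤ k ∨ k < -n) → (v 0 1).coeff k = 0) := by
  constructor
  · rintro ⟨x, rfl, -⟩
    refine ⟨by simp, by simp, by simp, ?_⟩
    intro k hk
    simp only [Matrix.of_apply, Matrix.cons_val_zero, Matrix.cons_val_one, Matrix.cons_val_fin_one]
    rw [coeff_S, dif_neg]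
    omega
  · rintro ⟨h0, h1, h2, h3⟩
    refine ⟨fun j => (v 0 1).coeff (-((j : ℕ) : ℤ) - 1), ?_, ?_⟩
    · ext1 i j
      fin_cases i <;> fin_cases j
      · simpa using h0
      · ext k
        simp only [Fin.zero_eta, Fin.mk_one, Matrix.of_apply, Matrix.cons_val_zero,
          Matrix.cons_val_one, Matrix.cons_val_fin_one]
        rw [coeff_S]
        split_ifs with h
        · congr 1; simp only []; omega
        · apply h3; omega
      · simpa using h2
      · simpa using h1
    · intro y hy
      funext j
      have h01 : v 0 1 = ∑ j : Fin n, HahnSeries.single (-((j : ℕ) : ℤ) - 1) (y j) := by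
        rw [hy]; simp
      simp only [h01]
      rw [coeff_S, dif_pos (by have := j.2; omega)]
      congr 1
      ext
      simp only []
      omega

lemma eq_one_of (f : LaurentSeries ℂ) (h1 : ∀ k : ℤ, 0 < k → f.coeff k = 0)
    (h2 : ∀ k : ℤ, k < 0 → f.coeff k = 0) (h3 : f.coeff 0 = 1) : f = 1 := by
  ext k
  rw [HahnSeries.coeff_one]
  rcases lt_trichotomy k 0 with h | h | h
  · rw [h2 k h, if_neg h.ne]
  · subst h; simpa using h3
  · rw [h1 k h, if_neg h.ne']

theorem stmt3 (n : ℕ) (hn : 1 ≤ n) (v : Matrix (Fin 2) (Fin 2) (LaurentSeries ℂ)) :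
    (v.det = 1 ∧
      (∀ i j : Fin 2, ∀ k : ℤ, 0 < k → (v i j).coeff k = 0) ∧
      (v 0 0).coeff 0 = 1 ∧ (v 1 1).coeff 0 = 1 ∧ (v 0 1).coeff 0 = 0 ∧
      (∀ i j : Fin 2, ∀ k : ℤ, k < 0 → ((Wmat n * v * (Wmat n)⁻¹) i j).coeff k = 0) ∧
      ((Wmat n * v * (Wmat n)⁻¹) 0 0).coeff 0 = 1 ∧
      ((Wmat n * v * (Wmat n)⁻¹) 1 1).coeff 0 = 1 ∧
      ((Wmat n * v * (Wmat n)⁻¹) 1 0).coeff 0 = 0)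
    ↔ ∃! x : Fin n → ℂ,
        v = !![1, ∑ j : Fin n, HahnSeries.single (-((j : ℕ) : ℤ) - 1) (x j); 0, 1] := by
  rw [core]
  rcases Nat.mod_two_eq_zero_or_one n with h | h
  · rw [Wconj_even n h]
    simp only [Fin.forall_fin_two, Matrix.of_apply, Matrix.cons_val_zero, Matrix.cons_val_one,
      Matrix.cons_val_fin_one, coeff_sm, Matrix.det_fin_two]
    constructor
    · rintro ⟨-, ⟨⟨a1, b1⟩, c1, d1⟩, a0, d0, b0, ⟨⟨a2, b2⟩, c2, d2⟩, -, -, c0⟩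
      refine ⟨eq_one_of _ a1 a2 a0, eq_one_of _ d1 d2 d0, ?_, ?_⟩
      · ext k
        rcases lt_or_ge 0 k with hk | hk
        · simpa using c1 k hk
        · have := c2 (k - n) (by omega)
          simpa using this
      · intro k hk
        rcases lt_trichotomy k 0 with hk' | hk' | hk'
        · have := b2 (k + n) (by omega)
          simpa using this
        · subst hk'; exact b0
        · exact b1 k hk'
    · rintro ⟨ha, hd, hc, hb⟩
      rw [ha, hd, hc]
      simp only [HahnSeries.coeff_one, HahnSeries.coeff_zero]
      refine ⟨by simp, ⟨⟨fun k hk => if_neg hk.ne', fun k hk => hb k (by omega)⟩, by simp,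
        fun k hk => if_neg hk.ne'⟩, by simp, by simp, hb 0 (by simp),
        ⟨⟨fun k hk => if_neg hk.ne, fun k hk => hb _ (by omega)⟩, by simp,
        fun k hk => if_neg hk.ne⟩, by simp, by simp, by simp⟩
  · rw [Wconj_odd n h]
    simp only [Fin.forall_fin_two, Matrix.of_apply, Matrix.cons_val_zero, Matrix.cons_val_one,
      Matrix.cons_val_fin_one, coeff_sm, Matrix.det_fin_two]
    constructor
    · rintro ⟨-, ⟨⟨a1, b1⟩, c1, d1⟩, a0, d0, b0, ⟨⟨d2, c2⟩, b2, a2⟩, -, -, b3⟩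
      refine ⟨eq_one_of _ a1 a2 a0, eq_one_of _ d1 d2 d0, ?_, ?_⟩
      · ext k
        rcases lt_or_ge 0 k with hk | hk
        · simpa using c1 k hk
        · have := c2 (k + (-n - 1)) (by omega)
          simpa using this
      · intro k hk
        rcases lt_trichotomy k 0 with hk' | hk' | hk'
        · rcases eq_or_ne k (0 - (n + 1)) with rfl | hne
          · exact b3
          · have := b2 (k + (n + 1)) (by omega)
            simpa using this
        · subst hk'; exact b0
        · exact b1 k hk'
    · rintro ⟨ha, hd, hc, hb⟩
      rw [ha, hd, hc]
      simp only [HahnSeries.coeff_one, HahnSeries.coeff_zero]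
      refine ⟨by simp, ⟨⟨fun k hk => if_neg hk.ne', fun k hk => hb k (by omega)⟩, by simp,
        fun k hk => if_neg hk.ne'⟩, by simp, by simp, hb 0 (by simp),
        ⟨⟨fun k hk => if_neg hk.ne, by simp⟩, fun k hk => hb _ (by omega),
        fun k hk => if_neg hk.ne⟩, by simp, by simp, hb _ (by omega)⟩
end

section
/- Work in M₂(ℂ[z, z⁻¹]). Define i_{α_1} to be the identity map on 2×2 complex matrices (viewed as constant Laurent-polynomial matrices), and define i_{α_0}((a, b; c, d)) = (d, c·z⁻¹; b·z, a). For j ≥ 1 set γ_j = α_0 if j is odd and γ_j = α_1 if j is even, set r_j = i_{γ_j}((0, i; i, 0)), and set w_0 = I, w_k = r_k · r_{k−1} ⋯ r_1 for k ≥ 1 (each r_j has determinant 1, so w_k is invertible). Then for every j ≥ 1 and every ζ ∈ ℂ: w_{j−1}^{−1} · i_{γ_j}((1, −conj(ζ); ζ, 1)) · w_{j−1} = (1, ζ·z^{−j}; −conj(ζ)·z^{j}, 1). -/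
open Matrix

/-- `i_{α₁}`: the inclusion of constant matrices into matrices over Laurent series. -/
noncomputable def ia1 (g : Matrix (Fin 2) (Fin 2) ℂ) :
    Matrix (Fin 2) (Fin 2) (LaurentSeries ℂ) :=
  g.map (fun c => HahnSeries.single (0 : ℤ) c)

/-- `i_{α₀}((a, b; c, d)) = (d, c z⁻¹; b z, a)`. -/
noncomputable def ia0 (g : Matrix (Fin 2) (Fin 2) ℂ) :
    Matrix (Fin 2) (Fin 2) (LaurentSeries ℂ) :=
  !![HahnSeries.single (0 : ℤ) (g 1 1), HahnSeries.single (-1 : ℤ) (g 1 0);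
     HahnSeries.single (1 : ℤ) (g 0 1), HahnSeries.single (0 : ℤ) (g 0 0)]

/-- `i_{γ_j}`: `i_{α₀}` for odd `j` and `i_{α₁}` for even `j`. -/
noncomputable def igam (j : ℕ) :
    Matrix (Fin 2) (Fin 2) ℂ → Matrix (Fin 2) (Fin 2) (LaurentSeries ℂ) :=
  if j % 2 = 1 then ia0 else ia1

/-- `r_j = i_{γ_j}((0, i; i, 0))`. -/
noncomputable def rmat (j : ℕ) : Matrix (Fin 2) (Fin 2) (LaurentSeries ℂ) :=
  igam j !![0, Complex.I; Complex.I, 0]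

/-- `w_0 = I`, `w_k = r_k ⋯ r_1`. -/
noncomputable def wmat : ℕ → Matrix (Fin 2) (Fin 2) (LaurentSeries ℂ)
  | 0 => 1
  | k + 1 => rmat (k + 1) * wmat k

theorem single_congr_aux {a b : ℤ} {x y : ℂ} (h : a = b) (h' : x = y) :
    (HahnSeries.single a x : LaurentSeries ℂ) = HahnSeries.single b y := by rw [h, h']

theorem det_rmat_aux (j : ℕ) : (rmat j).det = 1 := by
  unfold rmat igam
  split_ifs <;>
    simp [ia0, ia1, Matrix.det_fin_two, HahnSeries.single_mul_single]

theorem det_wmat_aux (k : ℕ) : (wmat k).det = 1 := by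
  induction k with
  | zero => simp [wmat]
  | succ k ih => rw [wmat, Matrix.det_mul, det_rmat_aux, ih, one_mul]

theorem wmat_even_aux (m : ℕ) : wmat (2 * m) =
    !![HahnSeries.single (m : ℤ) ((-1 : ℂ) ^ m), 0;
       0, HahnSeries.single (-(m : ℤ)) ((-1 : ℂ) ^ m)] := by
  induction m with
  | zero => simp [wmat, Matrix.one_fin_two]
  | succ m ih =>
    have h1 : (2 * m + 1) % 2 = 1 := by omega
    have h2 : ¬ (2 * m + 1 + 1) % 2 = 1 := by omega
    rw [show 2 * (m + 1) = 2 * m + 1 + 1 by ring, wmat, wmat, ih]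
    simp only [rmat, igam, if_pos h1, if_neg h2, ia0, ia1]
    ext a b : 2
    fin_cases a <;> fin_cases b <;>
      simp only [Matrix.mul_apply, Fin.sum_univ_two] <;>
      simp [-HahnSeries.single_zero_mul_eq_smul, HahnSeries.single_mul_single, -map_neg, -neg_mul,
        -mul_neg]
    · refine single_congr_aux (by ring) ?_
      rw [← mul_assoc, Complex.I_mul_I]; ring
    · refine single_congr_aux (by ring) ?_
      rw [← mul_assoc, Complex.I_mul_I]; ring

theorem stmt4 (j : ℕ) (hj : 1 ≤ j) (ζ : ℂ) :
    (wmat (j - 1))⁻¹ * igam j !![1, -(starRingEnd ℂ ζ); ζ, 1] * wmat (j - 1)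
      = !![1, HahnSeries.single (-(j : ℤ)) ζ;
           HahnSeries.single ((j : ℤ)) (-(starRingEnd ℂ ζ)), 1] := by
  obtain ⟨k, rfl⟩ : ∃ k, j = k + 1 := ⟨j - 1, by omega⟩
  rw [Nat.add_sub_cancel]
  have hu : IsUnit (wmat k).det := by rw [det_wmat_aux]; exact isUnit_one
  suffices h : igam (k + 1) !![1, -(starRingEnd ℂ ζ); ζ, 1] * wmat k = wmat k *
      !![1, HahnSeries.single (-((k + 1 : ℕ) : ℤ)) ζ;
           HahnSeries.single (((k + 1 : ℕ) : ℤ)) (-(starRingEnd ℂ ζ)), 1] by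
    rw [Matrix.mul_assoc, h, Matrix.nonsing_inv_mul_cancel_left _ _ hu]
  generalize -(starRingEnd ℂ ζ) = η
  have one_eq : (1 : LaurentSeries ℂ) = HahnSeries.single (0 : ℤ) (1 : ℂ) := rfl
  rcases Nat.even_or_odd' k with ⟨m, rfl | rfl⟩
  · have h1 : (2 * m + 1) % 2 = 1 := by omega
    rw [wmat_even_aux]
    simp only [igam, if_pos h1, ia0, one_eq]
    ext a b : 2
    fin_cases a <;> fin_cases b <;>
      simp only [Matrix.mul_apply, Fin.sum_univ_two] <;>
      simp [-HahnSeries.single_zero_one, -HahnSeries.single_zero_mul_eq_smul, HahnSeries.single_mul_single] <;>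
      exact single_congr_aux (by ring) (by ring)
  · have h1 : (2 * m + 1) % 2 = 1 := by omega
    have h2 : ¬ (2 * m + 1 + 1) % 2 = 1 := by omega
    rw [wmat, wmat_even_aux]
    simp only [rmat, igam, if_pos h1, if_neg h2, ia0, ia1, one_eq]
    ext a b : 2
    fin_cases a <;> fin_cases b <;>
      simp only [Matrix.mul_apply, Fin.sum_univ_two] <;>
      simp [-HahnSeries.single_zero_one, -HahnSeries.single_zero_mul_eq_smul, HahnSeries.single_mul_single] <;>
      exact single_congr_aux (by ring) (by ring)
end

section
/- Let n ≥ 1 and ζ = (ζ_1, …, ζ_n) ∈ ℂ^n, and let M_n(ζ) = (α_n, β_n; γ_n, δ_n) be as defined. Let ★ denote the ring involution of ℂ[z, z⁻¹] sending Σ c_k z^k to Σ conj(c_k) z^{−k}. Then: (i) det M_n(ζ) = ∏_{j=1}^{n} (1 + |ζ_j|²) (a constant); (ii) α_n = (δ_n)★ and γ_n = −(β_n)★; (iii) δ_n = 1 + Σ_{j=1}^{n} d_j z^{j} for some d_1, …, d_n ∈ ℂ, and β_n = Σ_{j=1}^{n} b_j z^{−j} for some b_1, …, b_n ∈ ℂ.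 -/
open Matrix

/-- The factor `(1, ζ_j z^{-j}; −conj(ζ_j) z^{j}, 1)`. -/
noncomputable def factor (j : ℕ) (c : ℂ) : Matrix (Fin 2) (Fin 2) (LaurentSeries ℂ) :=
  !![1, HahnSeries.single (-(j : ℤ)) c;
     HahnSeries.single ((j : ℤ)) (-(starRingEnd ℂ c)), 1]

/-- `M_n(ζ)`: the product of the factors for `j = n, n−1, …, 1`, the `j = n` factor leftmost
(`ζ` is indexed starting at `1`). -/
noncomputable def Mmat (ζ : ℕ → ℂ) : ℕ → Matrix (Fin 2) (Fin 2) (LaurentSeries ℂ)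
  | 0 => 1
  | k + 1 => factor (k + 1) (ζ (k + 1)) * Mmat ζ k

lemma Mmat_succ_00 (ζ : ℕ → ℂ) (n : ℕ) : (Mmat ζ (n+1)) 0 0 =
    (Mmat ζ n) 0 0 + HahnSeries.single (-((n+1 : ℕ) : ℤ)) (ζ (n+1)) * (Mmat ζ n) 1 0 := by
  simp [Mmat, factor, Matrix.mul_apply, Fin.sum_univ_two]

lemma Mmat_succ_01 (ζ : ℕ → ℂ) (n : ℕ) : (Mmat ζ (n+1)) 0 1 =
    (Mmat ζ n) 0 1 + HahnSeries.single (-((n+1 : ℕ) : ℤ)) (ζ (n+1)) * (Mmat ζ n) 1 1 := by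
  simp [Mmat, factor, Matrix.mul_apply, Fin.sum_univ_two]

lemma Mmat_succ_10 (ζ : ℕ → ℂ) (n : ℕ) : (Mmat ζ (n+1)) 1 0 =
    HahnSeries.single (((n+1 : ℕ) : ℤ)) (-(starRingEnd ℂ (ζ (n+1)))) * (Mmat ζ n) 0 0
      + (Mmat ζ n) 1 0 := by
  simp [Mmat, factor, Matrix.mul_apply, Fin.sum_univ_two]

lemma Mmat_succ_11 (ζ : ℕ → ℂ) (n : ℕ) : (Mmat ζ (n+1)) 1 1 =
    HahnSeries.single (((n+1 : ℕ) : ℤ)) (-(starRingEnd ℂ (ζ (n+1)))) * (Mmat ζ n) 0 1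
      + (Mmat ζ n) 1 1 := by
  simp [Mmat, factor, Matrix.mul_apply, Fin.sum_univ_two]

lemma Mmat_det (ζ : ℕ → ℂ) (n : ℕ) : (Mmat ζ n).det
        = HahnSeries.single (0 : ℤ)
            (((∏ j ∈ Finset.Icc 1 n, (1 + ‖ζ j‖ ^ 2) : ℝ) : ℂ)) := by
  induction n with
  | zero => simp [Mmat]
  | succ n ih =>
    have hf : (factor (n+1) (ζ (n+1))).det
        = HahnSeries.single (0 : ℤ) (((1 + ‖ζ (n+1)‖ ^ 2 : ℝ) : ℂ)) := by
      rw [factor, Matrix.det_fin_two_of, HahnSeries.single_mul_single, neg_add_cancel, mul_neg,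
        Complex.mul_conj', HahnSeries.single_neg, sub_neg_eq_add, one_mul]
      push_cast
      rw [HahnSeries.single_add]
      rfl
    rw [Mmat, Matrix.det_mul, ih, hf, HahnSeries.single_mul_single, add_zero,
      Finset.prod_Icc_succ_top (by omega), mul_comm, ← Complex.ofReal_mul]

lemma Mmat_star (ζ : ℕ → ℂ) (n : ℕ) :
    (∀ k : ℤ, ((Mmat ζ n) 0 0).coeff k = starRingEnd ℂ (((Mmat ζ n) 1 1).coeff (-k))) ∧
    (∀ k : ℤ, ((Mmat ζ n) 1 0).coeff k = -starRingEnd ℂ (((Mmat ζ n) 0 1).coeff (-k))) := by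
  induction n with
  | zero => 
    constructor <;> intro k <;> simp [Mmat, HahnSeries.coeff_one]
  | succ n ih =>
    obtain ⟨h1, h2⟩ := ih
    constructor <;> intro k
    · rw [Mmat_succ_00, Mmat_succ_11]
      simp only [HahnSeries.coeff_add, HahnSeries.coeff_single_mul, h1, h2, map_add, map_mul,
        map_neg, Complex.conj_conj]
      rw [show -(k - -((n+1 : ℕ) : ℤ)) = -k - ((n+1 : ℕ) : ℤ) by ring]
      ring
    · rw [Mmat_succ_10, Mmat_succ_01]
      simp only [HahnSeries.coeff_add, HahnSeries.coeff_single_mul, h1, h2, map_add, map_mul,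
        map_neg, Complex.conj_conj]
      rw [show -(k - ((n+1 : ℕ) : ℤ)) = -k - -((n+1 : ℕ) : ℤ) by ring]
      ring

lemma Mmat_supp (ζ : ℕ → ℂ) (n : ℕ) :
    ((Mmat ζ n) 1 1).coeff 0 = 1 ∧
    (∀ k : ℤ, k < 0 ∨ (n : ℤ) < k → ((Mmat ζ n) 1 1).coeff k = 0) ∧
    (∀ k : ℤ, 0 ≤ k ∨ k < -(n : ℤ) → ((Mmat ζ n) 0 1).coeff k = 0) := by
  induction n with
  | zero =>
    refine ⟨by simp [Mmat], ?_, ?_⟩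
    · intro k hk
      have : k ≠ 0 := by rintro rfl; simp at hk
      simp [Mmat, HahnSeries.coeff_one, this]
    · intro k hk
      simp [Mmat]
  | succ n ih =>
    obtain ⟨h0, h1, h2⟩ := ih
    rw [Mmat_succ_11, Mmat_succ_01]
    simp only [HahnSeries.coeff_add, HahnSeries.coeff_single_mul]
    refine ⟨?_, ?_, ?_⟩
    · rw [h0, h2 _ (by right; push_cast; omega)]; simp
    · intro k hk
      rw [h1 k (by push_cast at hk; omega), h2 _ (by push_cast at hk ⊢; omega)]; simp
    · intro k hk
      rw [h2 k (by push_cast at hk; omega), h1 _ (by push_cast at hk ⊢; omega)]; simp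

/-- Writing `M_n(ζ) = (α_n, β_n; γ_n, δ_n)`:
(i) `det M_n(ζ) = ∏_{j=1}^n (1+|ζ_j|²)` (a constant);
(ii) `α_n = (δ_n)★` and `γ_n = −(β_n)★`, stated coefficientwise, where `★` sends
`Σ c_k z^k` to `Σ conj(c_k) z^{-k}`;
(iii) `δ_n = 1 + Σ_{j=1}^n d_j z^j` and `β_n = Σ_{j=1}^n b_j z^{-j}` for some `d_j, b_j ∈ ℂ`. -/
theorem stmt5 (n : ℕ) (hn : 1 ≤ n) (ζ : ℕ → ℂ) :
    (Mmat ζ n).det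
        = HahnSeries.single (0 : ℤ)
            (((∏ j ∈ Finset.Icc 1 n, (1 + ‖ζ j‖ ^ 2) : ℝ) : ℂ)) ∧
    (∀ k : ℤ, ((Mmat ζ n) 0 0).coeff k = starRingEnd ℂ (((Mmat ζ n) 1 1).coeff (-k))) ∧
    (∀ k : ℤ, ((Mmat ζ n) 1 0).coeff k = -starRingEnd ℂ (((Mmat ζ n) 0 1).coeff (-k))) ∧
    (∃ d : ℕ → ℂ,
      (Mmat ζ n) 1 1 = 1 + ∑ j ∈ Finset.Icc 1 n, HahnSeries.single ((j : ℤ)) (d j)) ∧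
    (∃ b : ℕ → ℂ,
      (Mmat ζ n) 0 1 = ∑ j ∈ Finset.Icc 1 n, HahnSeries.single (-(j : ℤ)) (b j)) := by
  obtain ⟨h0, h1, h2⟩ := Mmat_supp ζ n
  refine ⟨Mmat_det ζ n, (Mmat_star ζ n).1, (Mmat_star ζ n).2,
    ⟨fun j => ((Mmat ζ n) 1 1).coeff j, ?_⟩, ⟨fun j => ((Mmat ζ n) 0 1).coeff (-(j : ℤ)), ?_⟩⟩
  · ext k
    rw [HahnSeries.coeff_add, HahnSeries.coeff_sum, HahnSeries.coeff_one]
    simp only [HahnSeries.coeff_single]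
    by_cases hk : 1 ≤ k ∧ k ≤ n
    · rw [Finset.sum_eq_single k.toNat]
      · have : ((k.toNat : ℕ) : ℤ) = k := by omega
        rw [this, if_neg (by omega)]; simp
      · intro b _ hb
        exact if_neg (by omega)
      · intro hb
        exact absurd (Finset.mem_Icc.2 (by omega)) hb
    · rw [Finset.sum_eq_zero]
      · by_cases hk0 : k = 0
        · subst hk0; simp [h0]
        · rw [h1 k (by omega), if_neg hk0, add_zero]
      · intro b hb
        rw [Finset.mem_Icc] at hb
        exact if_neg (by omega)
  · ext k
    rw [HahnSeries.coeff_sum]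
    simp only [HahnSeries.coeff_single]
    by_cases hk : k ≤ -1 ∧ -(n : ℤ) ≤ k
    · rw [Finset.sum_eq_single (-k).toNat]
      · have : -(((-k).toNat : ℕ) : ℤ) = k := by omega
        rw [this]; simp
      · intro b _ hb
        exact if_neg (by omega)
      · intro hb
        exact absurd (Finset.mem_Icc.2 (by omega)) hb
    · rw [Finset.sum_eq_zero]
      · exact h2 k (by omega)
      · intro b hb
        rw [Finset.mem_Icc] at hb
        exact if_neg (by omega)
end

section
/- Let n ≥ 1 and ζ = (ζ_1, …, ζ_n) ∈ ℂ^n, and let M_n(ζ) = (α_n, β_n; γ_n, δ_n) be as defined. The constant term of δ_n equals 1, so δ_n is invertible in the field ℂ((z)) of formal Laurent series; let x be the singular part (the sum of all strictly negative-degree terms) of δ_n^{−1}·β_n ∈ ℂ((z)). Then x is a Laurent polynomial supported in degrees −n, …, −1, and every entry of the matrix product (1, −x; 0, 1) · M_n(ζ) is a Laurent polynomial having only terms of nonnegative degree in z. -/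
open Matrix

/-- The singular part `(f)₋` of a Laurent series: the sum of its strictly
negative-degree terms. -/
noncomputable def singPart (f : LaurentSeries ℂ) : LaurentSeries ℂ where
  coeff k := if k < 0 then f.coeff k else 0
  isPWO_support' := by
    apply f.isPWO_support'.mono
    intro k hk
    simp only [Function.mem_support] at hk ⊢
    by_cases h : k < 0
    · simpa [h] using hk
    · simp [h] at hk

def LB (d : ℤ) (f : LaurentSeries ℂ) : Prop := ∀ k : ℤ, k < d → f.coeff k = 0

lemma LB.mono {d e : ℤ} {f : LaurentSeries ℂ} (h : LB d f) (hde : e ≤ d) : LB e f :=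
  fun k hk => h k (lt_of_lt_of_le hk hde)

lemma LB.add {d : ℤ} {f g : LaurentSeries ℂ} (hf : LB d f) (hg : LB d g) : LB d (f + g) :=
  fun k hk => by rw [HahnSeries.coeff_add, hf k hk, hg k hk, add_zero]

lemma LB.mul {d e : ℤ} {f g : LaurentSeries ℂ} (hf : LB d f) (hg : LB e g) :
    LB (d + e) (f * g) := by
  intro k hk
  rw [HahnSeries.coeff_mul]
  apply Finset.sum_eq_zero
  rintro ⟨i, j⟩ hij
  rw [Finset.mem_addAntidiagonal] at hij
  obtain ⟨h1, h2, h3⟩ := hij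
  simp only at h1 h2 h3
  by_cases hi : i < d
  · simp [hf i hi]
  · have hj : j < e := by omega
    simp [hg j hj]

lemma LB.single (d : ℤ) (c : ℂ) : LB d (HahnSeries.single d c) := by
  intro k hk
  exact HahnSeries.coeff_single_of_ne (ne_of_lt hk)

lemma LB.one : LB 0 (1 : LaurentSeries ℂ) := LB.single 0 1

lemma LB.zero (d : ℤ) : LB d (0 : LaurentSeries ℂ) := fun _ _ => rfl

lemma LB.inv {f : LaurentSeries ℂ} (hf : LB 0 f) (h1 : f.coeff 0 = 1) : LB 0 f⁻¹ := by
  have hne : f ≠ 0 := by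
    rintro rfl
    simp at h1
  have ho : f.order = 0 := by
    apply le_antisymm
    · exact HahnSeries.order_le_of_coeff_ne_zero (by rw [h1]; exact one_ne_zero)
    · by_contra hlt
      exact (HahnSeries.coeff_order_eq_zero.not.mpr hne) (hf _ (not_le.mp hlt))
  have hm := HahnSeries.order_mul hne (inv_ne_zero hne)
  rw [mul_inv_cancel₀ hne, HahnSeries.order_one, ho, zero_add] at hm
  intro k hk
  exact HahnSeries.coeff_eq_zero_of_lt_order (by rw [← hm]; exact hk)

lemma Mmat_bounds (ζ : ℕ → ℂ) (n : ℕ) :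
    LB (-(n : ℤ)) (Mmat ζ n 0 0) ∧ LB (-(n : ℤ)) (Mmat ζ n 0 1) ∧
    LB 0 (Mmat ζ n 1 0) ∧ LB 0 (Mmat ζ n 1 1) ∧ (Mmat ζ n 1 1).coeff 0 = 1 := by
  induction n with
  | zero =>
    simp only [Mmat, Matrix.one_apply]
    simpa using ⟨LB.one, LB.zero 0, LB.one⟩
  | succ n ih =>
    obtain ⟨ha, hb, hc, hd, h1⟩ := ih
    simp only [Mmat, factor, Matrix.mul_apply, Fin.sum_univ_two, Matrix.of_apply,
      Matrix.cons_val_zero, Matrix.cons_val_one, Matrix.cons_val', Matrix.cons_val_fin_one, one_mul]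
    have hs := LB.single (-((n + 1 : ℕ) : ℤ)) (ζ (n + 1))
    have ht := LB.single (((n + 1 : ℕ) : ℤ)) (-(starRingEnd ℂ (ζ (n + 1))))
    refine ⟨?_, ?_, ?_, ?_, ?_⟩
    · exact (ha.mono (by push_cast; omega)).add ((hs.mul hc).mono (by omega))
    · exact (hb.mono (by push_cast; omega)).add ((hs.mul hd).mono (by omega))
    · exact ((ht.mul ha).mono (by push_cast; omega)).add hc
    · exact ((ht.mul hb).mono (by push_cast; omega)).add hd
    · rw [HahnSeries.coeff_add, h1, (ht.mul hb) 0 (by push_cast; omega), zero_add]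

lemma Mmat_det_s6 (ζ : ℕ → ℂ) (n : ℕ) : LB 0 (Mmat ζ n).det := by
  induction n with
  | zero => simpa [Mmat] using LB.one
  | succ n ih =>
    rw [Mmat, Matrix.det_mul]
    refine (LB.mul (d := 0) ?_ ih).mono (by omega)
    rw [factor, Matrix.det_fin_two_of, HahnSeries.single_mul_single, one_mul, neg_add_cancel,
      sub_eq_add_neg, ← HahnSeries.single_neg]
    exact LB.one.add (LB.single _ _)

lemma LB.sub_sing (f : LaurentSeries ℂ) : LB 0 (f - singPart f) := by
  intro k hk
  rw [HahnSeries.coeff_sub]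
  simp [singPart, hk]

theorem stmt6 (n : ℕ) (hn : 1 ≤ n) (ζ : ℕ → ℂ) :
    ((Mmat ζ n) 1 1).coeff 0 = 1 ∧
    (∀ k : ℤ, (k < -(n : ℤ) ∨ 0 ≤ k) →
      (singPart (((Mmat ζ n) 1 1)⁻¹ * (Mmat ζ n) 0 1)).coeff k = 0) ∧
    (∀ i j : Fin 2, ∀ k : ℤ, k < 0 →
      ((!![1, -singPart (((Mmat ζ n) 1 1)⁻¹ * (Mmat ζ n) 0 1); 0, 1] * Mmat ζ n) i j).coeff k
        = 0) := by
  obtain ⟨ha, hb, hc, hd, h1⟩ := Mmat_bounds ζ n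
  have hdet := Mmat_det_s6 ζ n
  rw [Matrix.det_fin_two] at hdet
  generalize Mmat ζ n = M at *
  have hdi := hd.inv h1
  have hne : M 1 1 ≠ 0 := by
    intro h
    simp [h] at h1
  have hq := LB.sub_sing ((M 1 1)⁻¹ * M 0 1)
  refine ⟨h1, ?_, ?_⟩
  · intro k hk
    simp only [singPart]
    split_ifs with hk0
    · exact (hdi.mul hb) k (by omega)
    · rfl
  · set x := singPart ((M 1 1)⁻¹ * M 0 1) with hx
    intro i j
    change LB 0 _
    fin_cases i <;> fin_cases j <;>
      simp only [Matrix.mul_apply, Fin.sum_univ_two, Matrix.of_apply, Fin.zero_eta, Fin.mk_one,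
        Matrix.cons_val_zero, Matrix.cons_val_one, Matrix.cons_val', Matrix.cons_val_fin_one,
        one_mul, zero_mul, zero_add]
    · have : M 0 0 + -x * M 1 0 = (M 1 1)⁻¹ * (M 0 0 * M 1 1 - M 0 1 * M 1 0)
          + ((M 1 1)⁻¹ * M 0 1 - x) * M 1 0 := by
        field_simp
        ring
      rw [this]
      exact (hdi.mul hdet).add (hq.mul hc)
    · have : M 0 1 + -x * M 1 1 = ((M 1 1)⁻¹ * M 0 1 - x) * M 1 1 := by
        field_simp
        ring
      rw [this]
      exact hq.mul hd
    · exact hc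
    · exact hd
end

section
/- Let n ≥ 1, let ζ ∈ ℂ, and let x ∈ ℂ[z, z⁻¹] be a Laurent polynomial supported in degrees −n, …, −1. Then ( (x + ζ z^{−n−1}) · Σ_{p=0}^{n} (conj(ζ)·x·z^{n+1})^p )₋ = ( (1+|ζ|²) · Σ_{p=0}^{n} conj(ζ)^p · x^{p+1} · z^{p(n+1)} )₋ + ζ z^{−n−1}. -/
theorem mul_low (f g : LaurentSeries ℂ) (a b : ℤ) (hf : ∀ k < a, f.coeff k = 0)
    (hg : ∀ k < b, g.coeff k = 0) : ∀ k < a + b, (f * g).coeff k = 0 := by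
  intro k hk
  rw [HahnSeries.coeff_mul]
  apply Finset.sum_eq_zero
  rintro ⟨i, j⟩ hij
  rw [Finset.mem_addAntidiagonal] at hij
  obtain ⟨-, -, h⟩ := hij
  simp only at h ⊢
  by_cases hi : i < a
  · rw [hf i hi, zero_mul]
  · rw [hg j (by omega), mul_zero]

theorem pow_low (f : LaurentSeries ℂ) (hf : ∀ k < 1, f.coeff k = 0) (m : ℕ) :
    ∀ k < (m : ℤ), (f ^ m).coeff k = 0 := by
  induction m with
  | zero =>
    intro k hk
    rw [pow_zero, HahnSeries.coeff_one, if_neg]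
    have : k < 0 := by simpa using hk
    omega
  | succ m ih =>
    rw [pow_succ]
    push_cast
    exact mul_low _ _ _ _ ih hf

theorem singPart_add_low (f g : LaurentSeries ℂ) (hg : ∀ k < 0, g.coeff k = 0) :
    singPart (f + g) = singPart f := by
  ext k
  simp only [singPart, HahnSeries.coeff_add]
  split_ifs with h
  · rw [hg k h, add_zero]
  · rfl

theorem singPart_add_single (f : LaurentSeries ℂ) (a : ℤ) (ha : a < 0) (c : ℂ) :
    singPart (f + HahnSeries.single a c) = singPart f + HahnSeries.single a c := by
  ext k
  simp only [singPart, HahnSeries.coeff_add]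
  split_ifs with h
  · rfl
  · rw [HahnSeries.coeff_single_of_ne (by omega), add_zero]

/-- For `x` supported in degrees `−n, …, −1`:
`((x + ζ z^{−n−1}) Σ_{p=0}^n (conj(ζ) x z^{n+1})^p)₋
  = ((1+|ζ|²) Σ_{p=0}^n conj(ζ)^p x^{p+1} z^{p(n+1)})₋ + ζ z^{−n−1}`. -/
theorem stmt8 (n : ℕ) (hn : 1 ≤ n) (ζ : ℂ) (x : LaurentSeries ℂ)
    (hx : ∀ k : ℤ, (k < -(n : ℤ) ∨ 0 ≤ k) → x.coeff k = 0) :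
    singPart ((x + HahnSeries.single (-(n : ℤ) - 1) ζ) *
        ∑ p ∈ Finset.range (n + 1),
          (HahnSeries.single (0 : ℤ) (starRingEnd ℂ ζ) * x *
            HahnSeries.single ((n : ℤ) + 1) 1) ^ p)
      = singPart (HahnSeries.single (0 : ℤ) (((1 + ‖ζ‖ ^ 2 : ℝ) : ℂ)) *
            ∑ p ∈ Finset.range (n + 1),
              HahnSeries.single (0 : ℤ) ((starRingEnd ℂ ζ) ^ p) * x ^ (p + 1) *
                HahnSeries.single ((p : ℤ) * ((n : ℤ) + 1)) 1)
          + HahnSeries.single (-(n : ℤ) - 1) ζ := by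
  have hx' : ∀ k < -(n : ℤ), x.coeff k = 0 := fun k hk => hx k (Or.inl hk)
  set y : LaurentSeries ℂ := HahnSeries.single (0 : ℤ) (starRingEnd ℂ ζ) * x *
            HahnSeries.single ((n : ℤ) + 1) 1 with hy
  have hs : ∀ (a : ℤ) (c : ℂ), ∀ k < a, (HahnSeries.single a c).coeff k = 0 := fun a c k hk =>
    HahnSeries.coeff_single_of_ne hk.ne
  have hylow : ∀ k < 1, y.coeff k = 0 := by
    intro k hk
    exact mul_low _ _ _ _ (mul_low _ _ _ _ (hs 0 _) hx') (hs _ _) k (by omega)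
  have hsum : ∑ p ∈ Finset.range (n + 1),
              HahnSeries.single (0 : ℤ) ((starRingEnd ℂ ζ) ^ p) * x ^ (p + 1) *
                HahnSeries.single ((p : ℤ) * ((n : ℤ) + 1)) 1
      = x * ∑ p ∈ Finset.range (n + 1), y ^ p := by
    rw [Finset.mul_sum]
    refine Finset.sum_congr rfl fun p _ => ?_
    rw [hy, mul_pow, mul_pow, HahnSeries.single_pow, HahnSeries.single_pow, one_pow, smul_zero,
      nsmul_eq_mul]
    ring
  have hw : HahnSeries.single (-(n : ℤ) - 1) ζ * y
      = HahnSeries.single (0 : ℤ) ((‖ζ‖ ^ 2 : ℝ) : ℂ) * x := by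
    have h1 : HahnSeries.single (-(n : ℤ) - 1) ζ * y = (HahnSeries.single (-(n : ℤ) - 1) ζ *
      HahnSeries.single (0 : ℤ) (starRingEnd ℂ ζ) * HahnSeries.single ((n : ℤ) + 1) 1) * x := by
      rw [hy]; ring
    rw [h1, HahnSeries.single_mul_single, HahnSeries.single_mul_single, mul_one, Complex.mul_conj']
    have h2 : -(n : ℤ) - 1 + 0 + (n + 1) = 0 := by ring
    rw [h2]
    push_cast
    rfl
  have hone : HahnSeries.single (0 : ℤ) (((1 + ‖ζ‖ ^ 2 : ℝ) : ℂ))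
      = 1 + HahnSeries.single (0 : ℤ) ((‖ζ‖ ^ 2 : ℝ) : ℂ) := by
    rw [Complex.ofReal_add, HahnSeries.single_add, Complex.ofReal_one]
    rfl
  rw [hsum, hone, ← singPart_add_single _ _ (by omega)]
  set d : LaurentSeries ℂ := HahnSeries.single (0 : ℤ) ((‖ζ‖ ^ 2 : ℝ) : ℂ) with hd
  set w : LaurentSeries ℂ := HahnSeries.single (-(n : ℤ) - 1) ζ with hwd
  rw [← singPart_add_low ((x + w) * _) (d * x * y ^ n) ?_]
  · congr 1
    have e1 := Finset.sum_range_succ (fun p => y ^ p) n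
    have e2 : ∑ p ∈ Finset.range (n + 1), y ^ p = y * ∑ p ∈ Finset.range n, y ^ p + 1 := by
      rw [Finset.sum_range_succ', Finset.mul_sum, pow_zero]
      simp only [pow_succ']
    rw [add_mul x w]
    have e3 : w * ∑ p ∈ Finset.range (n + 1), y ^ p
        = d * x * ∑ p ∈ Finset.range n, y ^ p + w := by
      rw [e2, mul_add, ← mul_assoc, hw, mul_one]
    rw [e3, e1]
    ring
  · intro k hk
    exact mul_low _ _ _ _ (mul_low _ _ _ _ (hs 0 _) hx') (pow_low y hylow n) k (by omega)
end

section
/- Let n ≥ 1, let ζ ∈ ℂ, let x ∈ ℂ[z, z⁻¹] be a Laurent polynomial supported in degrees −n, …, −1, and let h ∈ ℂ[z, z⁻¹] be a Laurent polynomial having only terms of nonnegative degree. Then ( (x + h + ζ z^{−n−1}) · Σ_{p=0}^{n} (conj(ζ)·(x+h)·z^{n+1})^p )₋ = ( (x + ζ z^{−n−1}) · Σ_{p=0}^{n} (conj(ζ)·x·z^{n+1})^p )₋; that is, replacing x by x + h does not change the singular part of the recursion expression. -/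
/-- Laurent series with only nonnegative-degree terms form a subring. -/
noncomputable def nonnegPart : Subring (LaurentSeries ℂ) where
  carrier := {f | ∀ k : ℤ, k < 0 → f.coeff k = 0}
  zero_mem' := by intro k _; simp
  one_mem' := by
    intro k hk
    rw [HahnSeries.coeff_one, if_neg (by omega)]
  add_mem' := by
    intro a b ha hb k hk
    rw [HahnSeries.coeff_add, ha k hk, hb k hk, add_zero]
  neg_mem' := by
    intro a ha k hk
    rw [HahnSeries.coeff_neg, ha k hk, neg_zero]
  mul_mem' := by
    intro a b ha hb k hk
    rw [HahnSeries.coeff_mul]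
    apply Finset.sum_eq_zero
    intro ij hij
    rw [Finset.mem_addAntidiagonal] at hij
    have h3 := hij.2.2
    by_cases h1 : ij.1 < 0
    · rw [ha _ h1, zero_mul]
    · rw [hb _ (by omega), mul_zero]

lemma mem_nonnegPart (f : LaurentSeries ℂ) :
    f ∈ nonnegPart ↔ ∀ k : ℤ, k < 0 → f.coeff k = 0 := Iff.rfl

lemma single_mem_nonnegPart (m : ℤ) (hm : 0 ≤ m) (c : ℂ) :
    (HahnSeries.single m c : LaurentSeries ℂ) ∈ nonnegPart := by
  intro k hk
  exact HahnSeries.coeff_single_of_ne (by omega)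

lemma singPart_eq_of_sub_mem (f g : LaurentSeries ℂ) (hfg : f - g ∈ nonnegPart) :
    singPart f = singPart g := by
  ext k
  simp only [singPart]
  split_ifs with hk
  · have := hfg k hk
    rw [HahnSeries.coeff_sub] at this
    exact sub_eq_zero.mp this
  · rfl

lemma pow_sub_pow_mem (R : Subring (LaurentSeries ℂ)) (A B : LaurentSeries ℂ)
    (hA : A ∈ R) (hB : B ∈ R) (p : ℕ) : ∃ q ∈ R, A ^ p - B ^ p = (A - B) * q := by
  refine ⟨∑ i ∈ Finset.range p, A ^ i * B ^ (p - 1 - i), ?_, ?_⟩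
  · exact sum_mem fun i _ => mul_mem (pow_mem hA _) (pow_mem hB _)
  · rw [mul_comm, Commute.geom_sum₂_mul (Commute.all A B)]

/-- For `x` supported in degrees `−n, …, −1` and `h` with only nonnegative-degree terms,
replacing `x` by `x + h` does not change the singular part of the recursion expression:
`((x + h + ζ z^{−n−1}) Σ_{p=0}^n (conj(ζ)(x+h) z^{n+1})^p)₋
  = ((x + ζ z^{−n−1}) Σ_{p=0}^n (conj(ζ) x z^{n+1})^p)₋`. -/
theorem stmt9 (n : ℕ) (hn : 1 ≤ n) (ζ : ℂ) (x h : LaurentSeries ℂ)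
    (hx : ∀ k : ℤ, (k < -(n : ℤ) ∨ 0 ≤ k) → x.coeff k = 0)
    (hh : ∀ k : ℤ, k < 0 → h.coeff k = 0) :
    singPart ((x + h + HahnSeries.single (-(n : ℤ) - 1) ζ) *
        ∑ p ∈ Finset.range (n + 1),
          (HahnSeries.single (0 : ℤ) (starRingEnd ℂ ζ) * (x + h) *
            HahnSeries.single ((n : ℤ) + 1) 1) ^ p)
      = singPart ((x + HahnSeries.single (-(n : ℤ) - 1) ζ) *
          ∑ p ∈ Finset.range (n + 1),
            (HahnSeries.single (0 : ℤ) (starRingEnd ℂ ζ) * x *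
              HahnSeries.single ((n : ℤ) + 1) 1) ^ p) := by
  apply singPart_eq_of_sub_mem
  set w : LaurentSeries ℂ := HahnSeries.single (-(n : ℤ) - 1) ζ with hw
  set c : LaurentSeries ℂ := HahnSeries.single (0 : ℤ) (starRingEnd ℂ ζ) with hc
  set Z : LaurentSeries ℂ := HahnSeries.single ((n : ℤ) + 1) 1 with hZ
  have hcm : c ∈ nonnegPart := single_mem_nonnegPart _ le_rfl _
  have hZm : Z ∈ nonnegPart := single_mem_nonnegPart _ (by omega) _
  have hhm : h ∈ nonnegPart := hh
  have hwZ : w * Z ∈ nonnegPart := by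
    rw [hw, hZ, HahnSeries.single_mul_single]
    exact single_mem_nonnegPart _ (by omega) _
  have hxZ : x * Z ∈ nonnegPart := by
    intro k hk
    have h1 : k = (k - (n + 1)) + ((n : ℤ) + 1) := by ring
    rw [h1, hZ, HahnSeries.coeff_mul_single_add, hx _ (Or.inl (by omega)), zero_mul]
  have hB : c * x * Z ∈ nonnegPart := by
    rw [mul_assoc]; exact mul_mem hcm hxZ
  have hA : c * (x + h) * Z ∈ nonnegPart := by
    have : c * (x + h) * Z = c * x * Z + c * h * Z := by ring
    rw [this]
    exact add_mem hB (mul_mem (mul_mem hcm hhm) hZm)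
  choose q hq hq' using pow_sub_pow_mem nonnegPart _ _ hA hB
  have hsum : ∑ p ∈ Finset.range (n + 1), (c * (x + h) * Z) ^ p
      = ∑ p ∈ Finset.range (n + 1), (c * x * Z) ^ p
        + (c * h * Z) * ∑ p ∈ Finset.range (n + 1), q p := by
    rw [Finset.mul_sum, ← Finset.sum_add_distrib]
    refine Finset.sum_congr rfl fun p _ => ?_
    have := hq' p
    linear_combination this
  have hQ : ∑ p ∈ Finset.range (n + 1), q p ∈ nonnegPart := sum_mem fun p _ => hq p
  have hS : ∑ p ∈ Finset.range (n + 1), (c * (x + h) * Z) ^ p ∈ nonnegPart :=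
    sum_mem fun p _ => pow_mem hA p
  have key : (x + h + w) * ∑ p ∈ Finset.range (n + 1), (c * (x + h) * Z) ^ p
      - (x + w) * ∑ p ∈ Finset.range (n + 1), (c * x * Z) ^ p
      = h * ∑ p ∈ Finset.range (n + 1), (c * (x + h) * Z) ^ p
        + (x * Z + w * Z) * (c * h * ∑ p ∈ Finset.range (n + 1), q p) := by
    linear_combination (x + w) * hsum
  rw [key]
  exact add_mem (mul_mem hhm hS) (mul_mem (add_mem hxZ hwZ) (mul_mem (mul_mem hcm hhm) hQ))
end

section
/- Let n ≥ 1 and ζ = (ζ_1, …, ζ_n) ∈ ℂ^n, and set x_j = x_j^{(n)}(ζ_1, …, ζ_n) for 1 ≤ j ≤ n. Then for every 0 ≤ l < n, det( I_{n−l} + B((x_{l+1}, x_{l+2}, …, x_n)) · B((x_{l+1}, x_{l+2}, …, x_n))* ) = ∏_{j=1}^{n−l} (1 + |ζ_{l+j}|²)^{j}. In particular (l = 0), det( I_n + B((x_1, …, x_n))·B((x_1, …, x_n))* ) = ∏_{j=1}^{n} (1 + |ζ_j|²)^{j}. -/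
open Matrix

/-- The recursively defined Laurent polynomials `x⁽ᵏ⁾(ζ₁, …, ζ_k)`:
`x⁽¹⁾ = ζ₁ z⁻¹` and
`x⁽ᵏ⁺¹⁾ = ((1+|ζ_{k+1}|²) Σ_{p=0}^k conj(ζ_{k+1})^p (x⁽ᵏ⁾)^{p+1} z^{p(k+1)})₋ + ζ_{k+1} z^{−k−1}`
(`ζ` is indexed starting at `1`; the base case is subsumed via `x⁽⁰⁾ = 0`). -/
noncomputable def xrec (ζ : ℕ → ℂ) : ℕ → LaurentSeries ℂ
  | 0 => 0
  | m + 1 =>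
      singPart (HahnSeries.single (0 : ℤ) (((1 + ‖ζ (m + 1)‖ ^ 2 : ℝ) : ℂ)) *
          ∑ p ∈ Finset.range (m + 1),
            HahnSeries.single (0 : ℤ) ((starRingEnd ℂ (ζ (m + 1))) ^ p) *
              xrec ζ m ^ (p + 1) * HahnSeries.single ((p : ℤ) * ((m : ℤ) + 1)) 1)
        + HahnSeries.single (-(m : ℤ) - 1) (ζ (m + 1))


/-- Truncated lower triangular Toeplitz matrix of a power series. -/
noncomputable def Tz (N : ℕ) (f : PowerSeries ℂ) : Matrix (Fin N) (Fin N) ℂ :=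
  fun i k => if (k : ℕ) ≤ (i : ℕ) then PowerSeries.coeff ((i : ℕ) - (k : ℕ)) f else 0

lemma Tz_mul (N : ℕ) (f g : PowerSeries ℂ) : Tz N (f * g) = Tz N f * Tz N g := by
  ext i k
  rw [Matrix.mul_apply]
  simp only [Tz]
  rw [Fin.sum_univ_eq_sum_range (fun j => (if j ≤ (i : ℕ) then PowerSeries.coeff ((i : ℕ) - j) f else 0)
    * (if (k : ℕ) ≤ j then PowerSeries.coeff (j - (k : ℕ)) g else 0)) N]
  have hi := i.isLt
  by_cases h : (k : ℕ) ≤ (i : ℕ)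
  · rw [if_pos h, PowerSeries.coeff_mul,
      ← Finset.Nat.sum_antidiagonal_swap,
      Finset.Nat.sum_antidiagonal_eq_sum_range_succ_mk]
    have hs : ∑ j ∈ Finset.range N, (if j ≤ (i : ℕ) then PowerSeries.coeff ((i : ℕ) - j) f else 0)
        * (if (k : ℕ) ≤ j then PowerSeries.coeff (j - (k : ℕ)) g else 0)
        = ∑ j ∈ Finset.Ico (k : ℕ) (i + 1), PowerSeries.coeff ((i : ℕ) - j) f
          * PowerSeries.coeff (j - (k : ℕ)) g := by
      rw [← Finset.sum_subset (s₁ := Finset.Ico (k : ℕ) (i + 1))]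
      · apply Finset.sum_congr rfl
        intro j hj
        rw [Finset.mem_Ico] at hj
        rw [if_pos (by omega), if_pos (by omega)]
      · intro j hj
        rw [Finset.mem_Ico] at hj
        rw [Finset.mem_range]
        omega
      · intro j _ hj
        rw [Finset.mem_Ico] at hj
        by_cases h1 : j ≤ (i : ℕ)
        · rw [if_neg (show ¬ (k : ℕ) ≤ j by omega), mul_zero]
        · rw [if_neg h1, zero_mul]
    rw [hs, Finset.sum_Ico_eq_sum_range]
    have e : (i : ℕ) + 1 - k = (i - k : ℕ).succ := by omega
    rw [e]
    apply Finset.sum_congr rfl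
    intro j _
    simp only [Prod.swap]
    congr 3
    · omega
    · omega
  · rw [if_neg h]
    symm
    apply Finset.sum_eq_zero
    intro j _
    by_cases h1 : j ≤ (i : ℕ)
    · rw [if_neg (show ¬ (k : ℕ) ≤ j by omega), mul_zero]
    · rw [if_neg h1, zero_mul]

lemma Tz_add (N : ℕ) (f g : PowerSeries ℂ) : Tz N (f + g) = Tz N f + Tz N g := by
  ext i k
  simp only [Tz, Matrix.add_apply, map_add]
  split_ifs <;> simp

lemma Tz_sub (N : ℕ) (f g : PowerSeries ℂ) : Tz N (f - g) = Tz N f - Tz N g := by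
  ext i k
  simp only [Tz, Matrix.sub_apply, map_sub]
  split_ifs <;> simp

lemma Tz_C (N : ℕ) (c : ℂ) : Tz N (PowerSeries.C c) = c • 1 := by
  ext i k
  simp only [Tz, PowerSeries.coeff_C, Matrix.smul_apply, Matrix.one_apply, Fin.ext_iff]
  split_ifs <;> first | omega | simp

lemma Tz_congr (N : ℕ) (f g : PowerSeries ℂ)
    (h : ∀ i < N, PowerSeries.coeff i f = PowerSeries.coeff i g) : Tz N f = Tz N g := by
  ext i k
  simp only [Tz]
  rw [h _ (by omega)]

/-- One step of the recursion before truncation. -/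
noncomputable def gs (z : ℂ) (m : ℕ) (b : PowerSeries ℂ) : PowerSeries ℂ :=
  PowerSeries.C (((1 + ‖z‖ ^ 2 : ℝ) : ℂ)) * ∑ p ∈ Finset.range (m + 1),
    PowerSeries.C ((starRingEnd ℂ z) ^ p) * (PowerSeries.X * b) ^ (p + 1)

noncomputable def bs (ζ : ℕ → ℂ) : ℕ → PowerSeries ℂ
  | 0 => 0
  | m + 1 => PowerSeries.mk (fun i => if i < m + 1 then
      PowerSeries.coeff i (gs (ζ (m + 1)) m (bs ζ m)) else 0) + PowerSeries.C (ζ (m + 1))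

lemma xrec_eq (ζ : ℕ → ℂ) (m : ℕ) :
    xrec ζ m = HahnSeries.single (-(m : ℤ)) 1 * HahnSeries.ofPowerSeries ℤ ℂ (bs ζ m) := by
  induction m with
  | zero => simp [xrec, bs]
  | succ m ih =>
    have key : (HahnSeries.single (0 : ℤ) (((1 + ‖ζ (m + 1)‖ ^ 2 : ℝ) : ℂ)) *
          ∑ p ∈ Finset.range (m + 1),
            HahnSeries.single (0 : ℤ) ((starRingEnd ℂ (ζ (m + 1))) ^ p) *
              xrec ζ m ^ (p + 1) * HahnSeries.single ((p : ℤ) * ((m : ℤ) + 1)) 1)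
        = HahnSeries.single (-((m + 1 : ℕ) : ℤ)) 1 *
          HahnSeries.ofPowerSeries ℤ ℂ (gs (ζ (m + 1)) m (bs ζ m)) := by
      rw [gs, map_mul, map_sum, HahnSeries.ofPowerSeries_C, mul_left_comm]
      rw [HahnSeries.C_apply]
      congr 1
      rw [Finset.mul_sum]
      apply Finset.sum_congr rfl
      intro p _
      rw [ih, map_mul, map_pow (HahnSeries.ofPowerSeries ℤ ℂ), map_mul, HahnSeries.ofPowerSeries_C, HahnSeries.ofPowerSeries_X,
        mul_pow, mul_pow, HahnSeries.single_pow, HahnSeries.single_pow]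
      rw [mul_left_comm (HahnSeries.single (-((m + 1 : ℕ) : ℤ)) 1), mul_assoc, HahnSeries.C_apply]
      congr 1
      rw [mul_right_comm, ← mul_assoc, HahnSeries.single_mul_single, HahnSeries.single_mul_single]
      congr 2
      · simp only [nsmul_eq_mul]
        push_cast
        ring
      · simp
    rw [xrec, key, bs, map_add, mul_add]
    congr 1
    · ext k
      have hc : ∀ (F : PowerSeries ℂ), (HahnSeries.single (-((m + 1 : ℕ) : ℤ)) (1:ℂ) *
          HahnSeries.ofPowerSeries ℤ ℂ F).coeff k =
          (HahnSeries.ofPowerSeries ℤ ℂ F).coeff (k + (m + 1 : ℕ)) := by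
        intro F
        have := HahnSeries.coeff_single_mul_add (r := (1:ℂ)) (x := HahnSeries.ofPowerSeries ℤ ℂ F)
          (a := k + (m + 1 : ℕ)) (b := -((m + 1 : ℕ) : ℤ))
        rwa [one_mul, add_neg_cancel_right] at this
      rw [hc]
      simp only [singPart]
      rw [hc]
      rcases lt_or_ge (k + (m + 1 : ℕ)) 0 with h | h
      · have hz : ∀ (F : PowerSeries ℂ),
            (HahnSeries.ofPowerSeries ℤ ℂ F).coeff (k + (m + 1 : ℕ)) = 0 := by
          intro F
          rw [HahnSeries.ofPowerSeries_apply]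
          apply HahnSeries.embDomain_of_notMem_range
          rintro ⟨a, ha⟩
          simp at ha
          push_cast at h
          omega
        rw [hz, hz]; simp
      · obtain ⟨j, hj⟩ := Int.eq_ofNat_of_zero_le h
        rw [hj, HahnSeries.ofPowerSeries_apply_coeff, HahnSeries.ofPowerSeries_apply_coeff,
          PowerSeries.coeff_mk]
        by_cases h2 : k < 0
        · rw [if_pos h2, if_pos (by omega)]
        · rw [if_neg h2, if_neg (by omega)]
    · rw [HahnSeries.ofPowerSeries_C, HahnSeries.C_apply, HahnSeries.single_mul_single]
      congr 1
      · push_cast; ring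
      · simp

lemma xrec_coeff (ζ : ℕ → ℂ) (m i : ℕ) :
    (xrec ζ m).coeff ((i : ℤ) - m) = PowerSeries.coeff i (bs ζ m) := by
  have := HahnSeries.coeff_single_mul_add (r := (1:ℂ))
    (x := HahnSeries.ofPowerSeries ℤ ℂ (bs ζ m)) (a := (i : ℤ)) (b := -(m : ℤ))
  rw [xrec_eq, sub_eq_add_neg, this, one_mul, HahnSeries.ofPowerSeries_apply_coeff]

lemma bs_mobius (ζ : ℕ → ℂ) (m N : ℕ) (hN : N ≤ m + 1) :
    Tz N (bs ζ (m + 1)) * (1 - (starRingEnd ℂ (ζ (m + 1))) • Tz N (PowerSeries.X * bs ζ m))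
      = ζ (m + 1) • 1 + Tz N (PowerSeries.X * bs ζ m) := by
  set z := ζ (m + 1) with hz
  obtain ⟨u, hu⟩ : ∃ u, u = PowerSeries.X * bs ζ m := ⟨_, rfl⟩
  rw [← hu]
  have h1 : Tz N (bs ζ (m + 1)) = Tz N (gs z m (bs ζ m) + PowerSeries.C z) := by
    apply Tz_congr
    intro i hi
    rw [bs, map_add, map_add, PowerSeries.coeff_mk, if_pos (by omega)]
  have h2 : (1 : Matrix (Fin N) (Fin N) ℂ) - (starRingEnd ℂ z) • Tz N u
      = Tz N (1 - PowerSeries.C (starRingEnd ℂ z) * u) := by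
    rw [Tz_sub, Tz_mul, Tz_C, ← map_one (PowerSeries.C (R := ℂ)), Tz_C]
    simp
  rw [h1, h2, ← Tz_mul, ← Tz_C, ← Tz_add]
  set c := PowerSeries.C (starRingEnd ℂ z) with hc
  have hg : (gs z m (bs ζ m) + PowerSeries.C z) * (1 - c * u)
      = PowerSeries.C z + u - PowerSeries.C (((1 + ‖z‖ ^ 2 : ℝ) : ℂ)) * c ^ (m + 1)
          * (u * (bs ζ m) ^ (m + 1)) * PowerSeries.X ^ (m + 1) := by
    have hs : (∑ p ∈ Finset.range (m + 1),
        PowerSeries.C ((starRingEnd ℂ z) ^ p) * u ^ (p + 1)) * (1 - c * u)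
        = u * (1 - (c * u) ^ (m + 1)) := by
      rw [← geom_sum_mul_neg (c * u) (m + 1), ← mul_assoc u, Finset.mul_sum]
      congr 1
      apply Finset.sum_congr rfl
      intro p _
      rw [map_pow, ← hc]; ring
    have hn : PowerSeries.C (((1 + ‖z‖ ^ 2 : ℝ) : ℂ)) = 1 + c * PowerSeries.C z := by
      rw [hc, ← map_mul, ← map_one (PowerSeries.C (R := ℂ)), ← map_add]
      congr 1
      rw [mul_comm, Complex.mul_conj, Complex.normSq_eq_norm_sq]
      push_cast; rfl
    rw [add_mul, gs, ← hu, mul_assoc, hs, hn]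
    have : u ^ (m + 1) = PowerSeries.X ^ (m + 1) * bs ζ m ^ (m + 1) := by rw [hu, mul_pow]
    rw [mul_pow, this]; ring
  rw [hg]
  apply Tz_congr
  intro i hi
  rw [map_sub, PowerSeries.coeff_mul_X_pow', if_neg (by omega), sub_zero]

lemma det_shift (N : ℕ) (b : PowerSeries ℂ) :
    (1 + Tz (N + 1) (PowerSeries.X * b) * (Tz (N + 1) (PowerSeries.X * b))ᴴ).det
      = (1 + Tz N b * (Tz N b)ᴴ).det := by
  have h0 : ∀ k, Tz (N + 1) (PowerSeries.X * b) 0 k = 0 := by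
    intro k
    simp only [Tz]
    split_ifs <;> simp
  have hl : ∀ i, Tz (N + 1) (PowerSeries.X * b) i (Fin.last N) = 0 := by
    intro i
    simp only [Tz]
    have hi := i.isLt
    split_ifs with h
    · rw [Fin.val_last] at *
      rw [show (i : ℕ) - N = 0 by omega]; simp
    · rfl
  have hs : ∀ (i k : Fin N), Tz (N + 1) (PowerSeries.X * b) i.succ k.castSucc = Tz N b i k := by
    intro i k
    simp only [Tz, Fin.val_succ, Fin.val_castSucc]
    by_cases h : (k : ℕ) ≤ i
    · rw [if_pos h, if_pos (by omega), show (i : ℕ) + 1 - k = (i - k : ℕ) + 1 by omega,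
        PowerSeries.coeff_succ_X_mul]
    · rw [if_neg h]
      split_ifs with h'
      · rw [show (i : ℕ) + 1 - k = 0 by omega]; simp
      · rfl
  rw [Matrix.det_succ_row_zero, Finset.sum_eq_single 0]
  · have : (1 + Tz (N + 1) (PowerSeries.X * b) * (Tz (N + 1) (PowerSeries.X * b))ᴴ) 0 0 = 1 := by
      simp [Matrix.mul_apply, h0]
    rw [this]
    simp only [Fin.val_zero, pow_zero, one_mul]
    congr 1
    ext i k
    simp [Matrix.mul_apply, Fin.sum_univ_castSucc, hl, hs, Matrix.one_apply]
  · intro j _ hj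
    have : (1 + Tz (N + 1) (PowerSeries.X * b) * (Tz (N + 1) (PowerSeries.X * b))ᴴ) 0 j = 0 := by
      simp [Matrix.mul_apply, h0, Matrix.one_apply, hj.symm]
    rw [this]; simp
  · simp

lemma det_one_sub (N : ℕ) (c : ℂ) (b : PowerSeries ℂ) :
    (1 - c • Tz N (PowerSeries.X * b)).det = 1 := by
  rw [Matrix.det_of_isLowerTriangular]
  · apply Finset.prod_eq_one
    intro i _
    simp [Tz]
  · intro i k h
    have h' : i < k := h
    have h2 : ¬ (k : ℕ) ≤ i := by simpa using h'
    simp [Tz, Matrix.one_apply, h'.ne, h2]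

lemma det_step (ζ : ℕ → ℂ) (m N : ℕ) (hN : N ≤ m + 1) :
    (1 + Tz N (bs ζ (m + 1)) * (Tz N (bs ζ (m + 1)))ᴴ).det
      = ((1 + ‖ζ (m + 1)‖ ^ 2 : ℝ) : ℂ) ^ N *
        (1 + Tz N (PowerSeries.X * bs ζ m) * (Tz N (PowerSeries.X * bs ζ m))ᴴ).det := by
  have hm := bs_mobius ζ m N hN
  have hd := det_one_sub N (starRingEnd ℂ (ζ (m + 1))) (bs ζ m)
  have hcomm : Tz N (bs ζ (m + 1)) * Tz N (PowerSeries.X * bs ζ m)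
      = Tz N (PowerSeries.X * bs ζ m) * Tz N (bs ζ (m + 1)) := by
    rw [← Tz_mul, ← Tz_mul, mul_comm]
  generalize Tz N (bs ζ (m + 1)) = B at *
  generalize Tz N (PowerSeries.X * bs ζ m) = U at *
  generalize ζ (m + 1) = z at *
  set D := 1 - (starRingEnd ℂ z) • U with hD
  have hm' : D * B = z • 1 + U := by
    rw [← hm, hD, mul_sub, sub_mul]; simp [hcomm]
  have h : D * (1 + B * Bᴴ) * Dᴴ = ((1 + ‖z‖ ^ 2 : ℝ) : ℂ) • (1 + U * Uᴴ) := by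
    have e1 : D * (1 + B * Bᴴ) * Dᴴ = D * Dᴴ + (D * B) * (D * B)ᴴ := by
      rw [Matrix.conjTranspose_mul]; noncomm_ring
    have e2 : ((1 + ‖z‖ ^ 2 : ℝ) : ℂ) = 1 + z * starRingEnd ℂ z := by
      rw [Complex.mul_conj, Complex.normSq_eq_norm_sq]
      push_cast; rfl
    rw [e1, hm', e2, hD]
    simp only [Matrix.conjTranspose_sub, Matrix.conjTranspose_add, Matrix.conjTranspose_smul,
      Matrix.conjTranspose_one, mul_add, mul_sub, add_mul, sub_mul, one_mul, mul_one,
      Matrix.smul_mul, Matrix.mul_smul, smul_add, smul_smul, RCLike.star_def, Complex.conj_conj]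
    module
  have hdet := congrArg Matrix.det h
  rw [Matrix.det_mul, Matrix.det_mul, Matrix.det_conjTranspose, hd, Matrix.det_smul] at hdet
  simpa using hdet

lemma det_all (ζ : ℕ → ℂ) (l N : ℕ) :
    (1 + Tz N (bs ζ (l + N)) * (Tz N (bs ζ (l + N)))ᴴ).det
      = (((∏ j ∈ Finset.Icc 1 N, (1 + ‖ζ (l + j)‖ ^ 2) ^ j : ℝ)) : ℂ) := by
  induction N with
  | zero => simp
  | succ N ih =>
    rw [← add_assoc, det_step ζ (l + N) (N + 1) (by omega), det_shift, ih,
      Finset.prod_Icc_succ_top (by omega), mul_comm]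
    push_cast
    rfl

theorem stmt12 (n : ℕ) (hn : 1 ≤ n) (ζ : ℕ → ℂ) (l : ℕ) (hl : l < n) :
    (1 + Bmat (fun i : Fin (n - l) => (xrec ζ n).coeff (-((l : ℤ) + (i : ℕ) + 1))) *
          (Bmat (fun i : Fin (n - l) => (xrec ζ n).coeff (-((l : ℤ) + (i : ℕ) + 1))))ᴴ).det
      = (((∏ j ∈ Finset.Icc 1 (n - l), (1 + ‖ζ (l + j)‖ ^ 2) ^ j : ℝ)) : ℂ) := by
  have hB : Bmat (fun i : Fin (n - l) => (xrec ζ n).coeff (-((l : ℤ) + (i : ℕ) + 1)))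
      = Tz (n - l) (bs ζ n) := by
    ext i k
    have hi := i.isLt
    simp only [Bmat, Tz]
    by_cases h : (k : ℕ) ≤ i
    · rw [dif_pos h, if_pos h, ← xrec_coeff]
      congr 1
      omega
    · rw [dif_neg h, if_neg h]
  rw [hB]
  have := det_all ζ l (n - l)
  rwa [show l + (n - l) = n by omega] at this
end
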